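/- arXiv:1502.04178 — 2 statements merged into one kernel-verified Lean document; each statement's English description precedes it below -/
import Mathlib

section
/- Let f be C²-smooth on an open neighbourhood of S^{n-1} with ∫ f dσ_{n-1} = 0 and ‖f''(θ)‖ ≤ 1 (operator norm of the Euclidean Hessian) for every θ ∈ S^{n-1}. Then log ∫ exp{ ((n−1)/2) f } dσ_{n-1} ≤ ((n−1)/2) ∫ |∇f|² dσ_{n-1}, where ∇f is the Euclidean gradient. -/
open MeasureTheory Metric Filter
open scoped RealInnerProductSpace ENNReal NNReal

noncomputable section

namespace SecondOrderConc

/-- Euclidean space ℝⁿ. -/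
abbrev E (n : ℕ) : Type := EuclideanSpace ℝ (Fin n)

/-- The uniform (normalized rotation-invariant) probability measure `σ_{n-1}`
on the unit sphere `S^{n-1}`, viewed as a measure on the ambient space ℝⁿ. -/
def sphMeasure (n : ℕ) : Measure (E n) :=
  ((((volume : Measure (E n)).toSphere).map Subtype.val) Set.univ)⁻¹ •
    (((volume : Measure (E n)).toSphere).map Subtype.val)

variable {n : ℕ}

/-- Euclidean Hessian of `f` at `x`, as a continuous linear operator on ℝⁿ. -/
def hess (f : E n → ℝ) (x : E n) : E n →L[ℝ] E n :=
  fderiv ℝ (gradient f) x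

/-- Squared Hilbert–Schmidt norm of an operator on ℝⁿ. -/
def hsNormSq (A : E n →L[ℝ] E n) : ℝ :=
  ∑ i : Fin n, ‖A (EuclideanSpace.single i 1)‖ ^ 2

/-- Orthogonal projection of ℝⁿ onto `θ^⊥` (for a unit vector `θ`). -/
def projPerp (θ : E n) : E n →L[ℝ] E n :=
  ContinuousLinearMap.id ℝ (E n) - (innerSL ℝ θ).smulRight θ

/-- Spherical gradient `∇_S f(θ) = ∇f(θ) − ⟨∇f(θ),θ⟩θ`. -/
def sgrad (f : E n → ℝ) (θ : E n) : E n :=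
  gradient f θ - ⟪gradient f θ, θ⟫ • θ

/-- Spherical Hessian `f''_S(θ) = P_{θ^⊥} (f''(θ) − ⟨∇f(θ),θ⟩ I_n) P_{θ^⊥}`. -/
def sHess (f : E n → ℝ) (θ : E n) : E n →L[ℝ] E n :=
  (projPerp θ).comp
    ((hess f θ - ⟪gradient f θ, θ⟫ • ContinuousLinearMap.id ℝ (E n)).comp (projPerp θ))

/-- Spherical Laplacian `Δ_S f(θ) = Tr f''_S(θ)`. -/
def sLap (f : E n → ℝ) (θ : E n) : ℝ :=
  LinearMap.trace ℝ (E n) (sHess f θ).toLinearMap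

/-- Euclidean Laplacian `Δ f = Tr f''`. -/
def eLap (f : E n → ℝ) (x : E n) : ℝ :=
  LinearMap.trace ℝ (E n) (hess f x).toLinearMap

/-- 0-homogeneous extension to `ℝⁿ \ {0}` of (the restriction to the sphere of) `g`. -/
def ext0 (g : E n → ℝ) : E n → ℝ := fun x => g (‖x‖⁻¹ • x)

section Helpers
open scoped ContDiff Topology

/-- Unit sphere of `ℝⁿ`. -/
abbrev sph (n : ℕ) : Set (E n) := Metric.sphere (0 : E n) 1

/-- The tangential direction at `x` obtained from the `i`-th basis vector. -/
def tvec (i : Fin n) (x : E n) : E n := EuclideanSpace.single i 1 - x i • x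

/-- The `i`-th component of the tangential gradient. -/
def tD (i : Fin n) (w : E n → ℝ) : E n → ℝ := fun x => fderiv ℝ w x (tvec i x)

/-- The spherical Laplacian, as a sum of squares of tangential derivatives. -/
def sL (w : E n → ℝ) : E n → ℝ := fun x => ∑ i, tD i (tD i w) x

/-- The squared norm of the tangential gradient. -/
def sG (w : E n → ℝ) : E n → ℝ := fun x => ∑ i, tD i w x ^ 2

/-- Smoothness near every point of the sphere. -/
def Sm (w : E n → ℝ) : Prop := ∀ x ∈ sph n, ContDiffAt ℝ ∞ w x

lemma sum_sq_sph {x : E n} (hx : x ∈ sph n) : ∑ i, x i ^ 2 = 1 := by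
  have h : ‖x‖ = 1 := by simpa using hx
  have := EuclideanSpace.norm_sq_eq x
  rw [h] at this
  simpa using this.symm

@[simp] lemma tvec_apply (i j : Fin n) (x : E n) :
    tvec i x j = (if i = j then 1 else 0) - x i * x j := by
  simp [tvec, eq_comm]

lemma sum_smul_tvec {x : E n} (hx : x ∈ sph n) : ∑ i, x i • tvec i x = 0 := by
  ext j
  simp only [WithLp.ofLp_sum, Finset.sum_apply, PiLp.smul_apply, tvec_apply, smul_eq_mul,
    PiLp.zero_apply, mul_sub, Finset.sum_sub_distrib]
  have : ∑ i, x i * (x i * x j) = (∑ i, x i ^ 2) * x j := by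
    rw [Finset.sum_mul]; exact Finset.sum_congr rfl fun i _ => by ring
  rw [this, sum_sq_sph hx]
  simp

lemma contDiff_tvec (i : Fin n) : ContDiff ℝ ∞ (tvec i : E n → E n) := by
  unfold tvec
  exact contDiff_const.sub (((EuclideanSpace.proj (𝕜 := ℝ) i).contDiff (n := ∞)).smul contDiff_id)

lemma contDiff_coord (i : Fin n) : ContDiff ℝ ∞ (fun x : E n => x i) :=
  (EuclideanSpace.proj (𝕜 := ℝ) i).contDiff

lemma differentiableAt_coord (i : Fin n) (x : E n) : DifferentiableAt ℝ (fun x : E n => x i) x :=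
  (contDiff_coord i).contDiffAt.differentiableAt (by simp)

lemma fderiv_coord (i : Fin n) (x h : E n) : fderiv ℝ (fun x : E n => x i) x h = h i := by
  have := (EuclideanSpace.proj i : E n →L[ℝ] ℝ).hasFDerivAt (x := x)
  have h2 : HasFDerivAt (fun x : E n => x i) (EuclideanSpace.proj i : E n →L[ℝ] ℝ) x := this
  rw [h2.fderiv]; rfl

lemma tD_coord (i j : Fin n) (x : E n) :
    tD i (fun y => y j) x = (if i = j then 1 else 0) - x i * x j := by
  simp [tD, fderiv_coord]

section rules
variable {w w' : E n → ℝ} {x : E n} {i j : Fin n}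

lemma tD_add (h : DifferentiableAt ℝ w x) (h' : DifferentiableAt ℝ w' x) :
    tD i (fun y => w y + w' y) x = tD i w x + tD i w' x := by
  simp [tD, fderiv_fun_add h h']

lemma tD_sub (h : DifferentiableAt ℝ w x) (h' : DifferentiableAt ℝ w' x) :
    tD i (fun y => w y - w' y) x = tD i w x - tD i w' x := by
  simp [tD, fderiv_fun_sub h h']

lemma tD_mul (h : DifferentiableAt ℝ w x) (h' : DifferentiableAt ℝ w' x) :
    tD i (fun y => w y * w' y) x = w x * tD i w' x + w' x * tD i w x := by
  simp [tD, fderiv_fun_mul h h']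

lemma tD_const_mul (c : ℝ) (h : DifferentiableAt ℝ w x) :
    tD i (fun y => c * w y) x = c * tD i w x := by
  simp [tD, fderiv_const_mul h]

lemma tD_sum {ι : Type*} (s : Finset ι) {w : ι → E n → ℝ} (h : ∀ k ∈ s, DifferentiableAt ℝ (w k) x) :
    tD i (fun y => ∑ k ∈ s, w k y) x = ∑ k ∈ s, tD i (w k) x := by
  simp [tD, fderiv_fun_sum h]

lemma tD_comp {φ : ℝ → ℝ} {φ' : ℝ} (hφ : HasDerivAt φ φ' (w x)) (h : DifferentiableAt ℝ w x) :
    tD i (fun y => φ (w y)) x = φ' * tD i w x := by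
  have := hφ.comp_hasFDerivAt x h.hasFDerivAt
  have h2 : HasFDerivAt (fun y => φ (w y)) (φ' • fderiv ℝ w x) x := this
  simp [tD, h2.fderiv]

lemma tD_congr (h : w =ᶠ[𝓝 x] w') : tD i w x = tD i w' x := by
  simp [tD, h.fderiv_eq]

lemma tD_congr_eventually (h : w =ᶠ[𝓝 x] w') : tD i w =ᶠ[𝓝 x] tD i w' := by
  filter_upwards [h.eventually_nhds] with y hy
  exact tD_congr hy

lemma ContDiffAt.tD_of {m k : WithTop ℕ∞} (h : ContDiffAt ℝ k w x) (hm : m + 1 ≤ k)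
    (hm2 : m ≤ (∞ : WithTop ℕ∞)) : ContDiffAt ℝ m (tD i w) x :=
  (h.fderiv_right hm).clm_apply ((contDiff_tvec i).contDiffAt.of_le hm2)

lemma Sm.tD (h : Sm w) : Sm (tD i w) := fun x hx =>
  ContDiffAt.tD_of (h x hx) (by simp) le_rfl

lemma Sm.sL (h : Sm w) : Sm (sL w) := fun x hx =>
  ContDiffAt.sum fun _ _ => h.tD.tD x hx

lemma Sm.sG (h : Sm w) : Sm (sG w) := fun x hx =>
  ContDiffAt.sum fun _ _ => (h.tD x hx).pow 2

lemma Sm.diff (h : Sm w) (hx : x ∈ sph n) : DifferentiableAt ℝ w x :=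
  (h x hx).differentiableAt (by simp)

lemma Sm.add (h : Sm w) (h' : Sm w') : Sm (fun y => w y + w' y) := fun x hx => (h x hx).add (h' x hx)
lemma Sm.mul (h : Sm w) (h' : Sm w') : Sm (fun y => w y * w' y) := fun x hx => (h x hx).mul (h' x hx)
lemma Sm.pow (h : Sm w) (k : ℕ) : Sm (fun y => w y ^ k) := fun x hx => (h x hx).pow k
lemma Sm.div (h : Sm w) (h' : Sm w') (h0 : ∀ x ∈ sph n, w' x ≠ 0) : Sm (fun y => w y / w' y) :=
  fun x hx => (h x hx).div (h' x hx) (h0 x hx)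
lemma Sm.coord (i : Fin n) : Sm (fun x : E n => x i) := fun _ _ => (contDiff_coord i).contDiffAt
lemma Sm.const (c : ℝ) : Sm (fun _ : E n => c) := fun _ _ => contDiffAt_const
lemma Sm.sum {ι : Type*} {s : Finset ι} {w : ι → E n → ℝ} (h : ∀ k ∈ s, Sm (w k)) :
    Sm (fun y => ∑ k ∈ s, w k y) := fun x hx => ContDiffAt.sum fun k hk => h k hk x hx

lemma Sm.eventually (h : Sm w) (hx : x ∈ sph n) (k : ℕ) : ∀ᶠ y in 𝓝 x, ContDiffAt ℝ k w y :=
  ((h x hx).of_le (by exact_mod_cast le_top)).eventually (by simp)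

lemma Sm.continuousOn (h : Sm w) : ContinuousOn w (sph n) :=
  fun x hx => (h x hx).continuousAt.continuousWithinAt

lemma sum_coord_tD (hx : x ∈ sph n) (w : E n → ℝ) : ∑ i, x i * tD i w x = 0 := by
  have := congrArg (fderiv ℝ w x) (sum_smul_tvec hx)
  simpa [tD] using this

lemma tD_tD (h : ContDiffAt ℝ 2 w x) (i j : Fin n) :
    tD i (tD j w) x = fderiv ℝ (fderiv ℝ w) x (tvec i x) (tvec j x)
      - ((tvec i x) j * fderiv ℝ w x x + x j * tD i w x) := by
  have h1 : DifferentiableAt ℝ (fderiv ℝ w) x :=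
    (h.fderiv_right (m := 1) (by norm_num)).differentiableAt (by simp)
  have h2 : HasFDerivAt (tvec j : E n → E n)
      (-(x j • ContinuousLinearMap.id ℝ (E n) +
        (EuclideanSpace.proj j : E n →L[ℝ] ℝ).smulRight x)) x := by
    unfold tvec
    have h3 : HasFDerivAt (fun x : E n => x j) (EuclideanSpace.proj j : E n →L[ℝ] ℝ) x :=
      (EuclideanSpace.proj j : E n →L[ℝ] ℝ).hasFDerivAt
    exact (h3.smul (hasFDerivAt_id x)).const_sub _
  have h4 := h1.hasFDerivAt.clm_apply h2
  have h5 := congrArg (fun T : E n →L[ℝ] ℝ => T (tvec i x)) h4.fderiv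
  change tD i (tD j w) x = _ at h5
  rw [h5]
  simp [tD]
  ring

lemma tD_comm (h : ContDiffAt ℝ 2 w x) (i j : Fin n) :
    tD i (tD j w) x = tD j (tD i w) x + x i * tD j w x - x j * tD i w x := by
  rw [tD_tD h, tD_tD h]
  have hs := (h.isSymmSndFDerivAt (by simp)).eq (tvec i x) (tvec j x)
  rw [hs]
  simp only [tvec_apply, eq_comm (a := i) (b := j)]
  ring

lemma sum_coord_tD_tD (hx : x ∈ sph n) (h : ContDiffAt ℝ 2 w x) (i : Fin n) :
    ∑ j, x j * tD i (tD j w) x = - tD i w x := by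
  have h1 : ∑ j, x j * fderiv ℝ (fderiv ℝ w) x (tvec i x) (tvec j x) = 0 := by
    have := congrArg (fderiv ℝ (fderiv ℝ w) x (tvec i x)) (sum_smul_tvec hx)
    simpa using this
  have h2 : ∑ j, x j * (tvec i x) j = 0 := by
    have h3 : ∑ j, x j * (x i * x j) = x i * ∑ j, x j ^ 2 := by
      rw [Finset.mul_sum]; exact Finset.sum_congr rfl fun i _ => by ring
    simp only [tvec_apply, mul_sub, Finset.sum_sub_distrib, h3, sum_sq_sph hx]
    simp
  have h3 : ∀ j, x j * tD i (tD j w) x = x j * fderiv ℝ (fderiv ℝ w) x (tvec i x) (tvec j x)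
      - x j * (tvec i x) j * fderiv ℝ w x x - x j ^ 2 * tD i w x := by
    intro j; rw [tD_tD h]; ring
  rw [Finset.sum_congr rfl fun j _ => h3 j, Finset.sum_sub_distrib, Finset.sum_sub_distrib, h1,
    ← Finset.sum_mul, h2, ← Finset.sum_mul, sum_sq_sph hx]
  ring

end rules

section pointwise
variable {w g : E n → ℝ} {x : E n}

lemma tD_sq (h : DifferentiableAt ℝ w x) (i : Fin n) :
    tD i (fun y => w y ^ 2) x = 2 * w x * tD i w x := by
  have := tD_comp (i := i) (φ := fun s => s ^ 2) (by simpa using hasDerivAt_pow 2 (w x)) h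
  simpa using this

lemma Sm.two (h : Sm w) (hx : x ∈ sph n) : ContDiffAt ℝ 2 w x := by
  exact_mod_cast (h.eventually hx 2).self_of_nhds

lemma comm_eventually (h : Sm w) (hx : x ∈ sph n) (i j : Fin n) :
    tD i (tD j w) =ᶠ[𝓝 x] fun y => tD j (tD i w) y + y i * tD j w y - y j * tD i w y := by
  filter_upwards [h.eventually hx 2] with y hy
  exact tD_comm (by exact_mod_cast hy) i j

lemma tD_tD_tD (h : Sm w) (hx : x ∈ sph n) (i j : Fin n) :
    tD i (tD i (tD j w)) x = tD j (tD i (tD i w)) x + x i * tD j (tD i w) x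
      - 2 * (x j * tD i (tD i w) x) + (1 - x i ^ 2) * tD j w x + x i * tD i (tD j w) x
      - ((if i = j then 1 else 0) - x i * x j) * tD i w x := by
  have d1 : DifferentiableAt ℝ (tD j (tD i w)) x := h.tD.tD.diff hx
  have d2 : DifferentiableAt ℝ (fun y : E n => y i * tD j w y) x :=
    ((Sm.coord i).mul h.tD).diff hx
  have d3 : DifferentiableAt ℝ (fun y : E n => y j * tD i w y) x :=
    ((Sm.coord j).mul h.tD).diff hx
  rw [tD_congr (comm_eventually h hx i j), tD_sub (d1.fun_add d2) d3, tD_add d1 d2,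
    tD_mul (differentiableAt_coord _ _) (h.tD.diff hx),
    tD_mul (differentiableAt_coord _ _) (h.tD.diff hx), tD_coord, tD_coord,
    tD_comm (h.tD.two hx) i j]
  simp only [if_true]
  ring

lemma sL_tD (h : Sm w) (hx : x ∈ sph n) (j : Fin n) :
    sL (tD j w) x = tD j (sL w) x + (n - 3) * tD j w x - 2 * x j * sL w x := by
  have e1 : tD j (sL w) x = ∑ i, tD j (tD i (tD i w)) x :=
    tD_sum _ fun i _ => h.tD.tD.diff hx
  have e2 : ∑ i, x i * tD j (tD i w) x = - tD j w x := sum_coord_tD_tD hx (h.two hx) j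
  have e3 : ∑ i, x i * tD i (tD j w) x = 0 := sum_coord_tD hx _
  have e4 : ∑ i, x i * x j * tD i w x = 0 := by
    have := congrArg (x j * ·) (sum_coord_tD hx w)
    simp only [Finset.mul_sum, mul_zero] at this
    rw [← this]; exact Finset.sum_congr rfl fun i _ => by ring
  have e5 : ∑ i, x i ^ 2 * tD j w x = tD j w x := by
    rw [← Finset.sum_mul, sum_sq_sph hx, one_mul]
  have e7 : ∑ _i : Fin n, tD j w x = n * tD j w x := by simp
  unfold sL
  simp only [tD_tD_tD h hx, Finset.sum_sub_distrib, Finset.sum_add_distrib, sub_mul,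
    ← Finset.mul_sum, one_mul]
  rw [e2, e3, e4, e5, e7]
  simp only [ite_mul, one_mul, zero_mul, Finset.sum_ite_eq', Finset.mem_univ, if_true]
  change _ = tD j (sL w) x + _ - _
  rw [e1]
  ring

lemma sL_mul (h : Sm w) (h' : Sm g) (hx : x ∈ sph n) :
    sL (fun y => w y * g y) x = w x * sL g x + g x * sL w x + 2 * ∑ i, tD i w x * tD i g x := by
  have key : ∀ i, tD i (tD i (fun y => w y * g y)) x =
      w x * tD i (tD i g) x + g x * tD i (tD i w) x + 2 * (tD i w x * tD i g x) := by
    intro i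
    have : tD i (fun y => w y * g y) =ᶠ[𝓝 x] fun y => w y * tD i g y + g y * tD i w y := by
      filter_upwards [h.eventually hx 1, h'.eventually hx 1] with y hy hy'
      exact tD_mul (hy.differentiableAt (by simp)) (hy'.differentiableAt (by simp))
    rw [tD_congr this, tD_add ((h.mul h'.tD).diff hx) ((h'.mul h.tD).diff hx),
      tD_mul (h.diff hx) (h'.tD.diff hx), tD_mul (h'.diff hx) (h.tD.diff hx)]
    ring
  unfold sL
  simp only [key, Finset.sum_add_distrib, Finset.mul_sum]

/-- The squared norm of the matrix of second tangential derivatives. -/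
def sH (w : E n → ℝ) : E n → ℝ := fun x => ∑ j, sG (tD j w) x

lemma sG_le_sH (h : Sm w) (hx : x ∈ sph n) : sG w x ≤ sH w x := by
  have : ∀ i, tD i w x ^ 2 ≤ ∑ j, tD i (tD j w) x ^ 2 := by
    intro i
    have h1 := Finset.sum_mul_sq_le_sq_mul_sq Finset.univ (fun j => x j) (fun j => tD i (tD j w) x)
    rw [sum_coord_tD_tD hx (h.two hx), sum_sq_sph hx] at h1
    simpa using h1
  calc sG w x ≤ ∑ i, ∑ j, tD i (tD j w) x ^ 2 := Finset.sum_le_sum fun i _ => this i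
    _ = _ := Finset.sum_comm

lemma sL_sum {ι : Type*} {s : Finset ι} {w : ι → E n → ℝ} (h : ∀ k ∈ s, Sm (w k)) (hx : x ∈ sph n) :
    sL (fun y => ∑ k ∈ s, w k y) x = ∑ k ∈ s, sL (w k) x := by
  have key : ∀ i, tD i (tD i (fun y => ∑ k ∈ s, w k y)) x = ∑ k ∈ s, tD i (tD i (w k)) x := by
    intro i
    have : tD i (fun y => ∑ k ∈ s, w k y) =ᶠ[𝓝 x] fun y => ∑ k ∈ s, tD i (w k) y := by
      have : ∀ᶠ y in 𝓝 x, ∀ k ∈ s, ContDiffAt ℝ (1 : ℕ) (w k) y :=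
        (Filter.eventually_all_finset s).2 fun k hk => (h k hk).eventually hx 1
      filter_upwards [this] with y hy
      exact tD_sum _ fun k hk => (hy k hk).differentiableAt (by simp)
    rw [tD_congr this, tD_sum _ fun k hk => (h k hk).tD.diff hx]
  unfold sL
  simp only [key]
  exact Finset.sum_comm

/-- Pointwise Bochner identity. -/
lemma sL_sG (h : Sm w) (hx : x ∈ sph n) :
    sL (sG w) x = 2 * ∑ j, tD j w x * tD j (sL w) x + 2 * (n - 3) * sG w x + 2 * sH w x := by
  have e0 : sG w = fun y => ∑ j, tD j w y * tD j w y := by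
    funext y; exact Finset.sum_congr rfl fun j _ => by ring
  have e1 : ∑ j, tD j w x * (x j * sL w x) = 0 := by
    have := congrArg (sL w x * ·) (sum_coord_tD hx w)
    simp only [Finset.mul_sum, mul_zero] at this
    rw [← this]; exact Finset.sum_congr rfl fun i _ => by ring
  have e2 : ∀ j, sL (fun y => tD j w y * tD j w y) x = 2 * (tD j w x * tD j (sL w) x)
      + 2 * (n - 3) * tD j w x ^ 2 - 4 * (tD j w x * (x j * sL w x)) + 2 * sG (tD j w) x := by
    intro j
    rw [sL_mul h.tD h.tD hx, sL_tD h hx]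
    have : ∑ i, tD i (tD j w) x * tD i (tD j w) x = sG (tD j w) x :=
      Finset.sum_congr rfl fun j _ => by ring
    rw [this]
    ring
  rw [e0, sL_sum (fun k _ => h.tD.mul h.tD) hx, Finset.sum_congr rfl fun j _ => e2 j]
  simp only [Finset.sum_sub_distrib, Finset.sum_add_distrib, ← Finset.mul_sum, e1]
  have e3 : ∑ j, tD j w x * tD j w x = ∑ j, tD j w x ^ 2 :=
    Finset.sum_congr rfl fun j _ => by ring
  simp only [sH, e3]
  ring

lemma bochner_le (h : Sm w) (hx : x ∈ sph n) :
    2 * ∑ j, tD j w x * tD j (sL w) x + 2 * (n - 2) * sG w x ≤ sL (sG w) x := by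
  rw [sL_sG h hx]
  linarith [sG_le_sH h hx]

/-- The second tangential derivatives evaluated at the tangential gradient. -/
def sC (w : E n → ℝ) : E n → ℝ := fun x => ∑ j, ∑ i, tD i (tD j w) x * tD i w x * tD j w x

/-- The trace inequality for the tangential matrix `Hess w + c ∇w ⊗ ∇w`. -/
lemma trace_sq_le (h : Sm w) (hx : x ∈ sph n) (c : ℝ) :
    (sL w x + c * sG w x) ^ 2 ≤
      (n - 1) * (sH w x - sG w x + 2 * c * sC w x + c ^ 2 * sG w x ^ 2) := by
  let M : Fin n × Fin n → ℝ := fun p =>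
    tD p.1 (tD p.2 w) x + x p.2 * tD p.1 w x + c * (tD p.1 w x * tD p.2 w x)
  let P : Fin n × Fin n → ℝ := fun p => (if p.1 = p.2 then 1 else 0) - x p.1 * x p.2
  have h1 := Finset.sum_mul_sq_le_sq_mul_sq Finset.univ M P
  have s1 := sum_sq_sph hx
  have s2 := sum_coord_tD hx w
  have s3 := fun i => sum_coord_tD_tD hx (h.two hx) i
  have eMP : ∑ p, M p * P p = sL w x + c * sG w x := by
    have r1 : ∀ i, ∑ j, M (i, j) * P (i, j) = tD i (tD i w) x + x i * tD i w x
        + c * tD i w x ^ 2 - x i * (∑ j, x j * tD i (tD j w) x) - x i * tD i w x * ∑ j, x j ^ 2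
        - c * x i * tD i w x * ∑ j, x j * tD j w x := by
      intro i
      have : ∀ j, M (i, j) * P (i, j) = M (i, j) * (if i = j then 1 else 0)
          - x i * (x j * tD i (tD j w) x) - x i * tD i w x * x j ^ 2
          - c * x i * tD i w x * (x j * tD j w x) := by
        intro j; simp only [M, P]; ring
      rw [Finset.sum_congr rfl fun j _ => this j]
      simp only [Finset.sum_sub_distrib, ← Finset.mul_sum]
      simp only [mul_ite, mul_one, mul_zero, Finset.sum_ite_eq, Finset.mem_univ, if_true, M]
      ring
    rw [Fintype.sum_prod_type, Finset.sum_congr rfl fun i _ => r1 i]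
    simp only [s1, s2, s3, mul_zero, sub_zero]
    unfold sL sG
    rw [← add_zero (_ + _), Finset.mul_sum, ← Finset.sum_add_distrib]
    conv_rhs => rw [← s2]
    rw [← Finset.sum_add_distrib]
    exact Finset.sum_congr rfl fun i _ => by ring
  have ePP : ∑ p, P p ^ 2 = n - 1 := by
    have r1 : ∀ i, ∑ j, P (i, j) ^ 2 = 1 - 2 * x i ^ 2 + x i ^ 2 * ∑ j, x j ^ 2 := by
      intro i
      have : ∀ j, P (i, j) ^ 2 = (if i = j then 1 - 2 * x i * x j else 0) + x i ^ 2 * x j ^ 2 := by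
        intro j; simp only [P]; split_ifs <;> ring
      rw [Finset.sum_congr rfl fun j _ => this j, Finset.sum_add_distrib, ← Finset.mul_sum]
      simp only [Finset.sum_ite_eq, Finset.mem_univ, if_true]
      ring
    rw [Fintype.sum_prod_type, Finset.sum_congr rfl fun i _ => r1 i]
    simp only [s1, mul_one, Finset.sum_add_distrib, Finset.sum_sub_distrib, ← Finset.mul_sum]
    simp
    ring
  have eMM : ∑ p, M p ^ 2 = sH w x - sG w x + 2 * c * sC w x + c ^ 2 * sG w x ^ 2 := by
    have r1 : ∀ i, ∑ j, M (i, j) ^ 2 = ∑ j, tD i (tD j w) x ^ 2 + tD i w x ^ 2 * ∑ j, x j ^ 2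
        + c ^ 2 * (tD i w x ^ 2 * ∑ j, tD j w x ^ 2)
        + 2 * tD i w x * (∑ j, x j * tD i (tD j w) x)
        + 2 * c * (∑ j, tD i (tD j w) x * tD i w x * tD j w x)
        + 2 * c * tD i w x ^ 2 * ∑ j, x j * tD j w x := by
      intro i
      simp only [Finset.mul_sum, ← Finset.sum_add_distrib]
      exact Finset.sum_congr rfl fun j _ => by simp only [M]; ring
    rw [Fintype.sum_prod_type, Finset.sum_congr rfl fun i _ => r1 i]
    simp only [s1, s2, s3, Finset.sum_add_distrib, ← Finset.mul_sum, ← Finset.sum_mul]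
    have q1 : ∑ i, ∑ j, tD i (tD j w) x ^ 2 = sH w x := Finset.sum_comm
    have q2 : ∑ i, ∑ j, tD i (tD j w) x * tD i w x * tD j w x = sC w x := Finset.sum_comm
    have q3 : ∑ i, 2 * tD i w x * -tD i w x = -2 * sG w x := by
      rw [sG, Finset.mul_sum]; exact Finset.sum_congr rfl fun i _ => by ring
    rw [q1, q2, q3]
    simp only [sG]
    ring_nf
  rw [eMP, ePP, eMM] at h1
  linarith

end pointwise

section measure

lemma sphMeasure_eq (n : ℕ) : sphMeasure n = (((volume : Measure (E n)).toSphere) Set.univ)⁻¹ •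
    (((volume : Measure (E n)).toSphere).map Subtype.val) := by
  rw [sphMeasure, Measure.map_apply measurable_subtype_coe MeasurableSet.univ, Set.preimage_univ]

instance [NeZero n] : IsProbabilityMeasure (sphMeasure n) := by
  constructor
  rw [sphMeasure_eq, Measure.smul_apply, Measure.map_apply measurable_subtype_coe MeasurableSet.univ,
    Set.preimage_univ, smul_eq_mul]
  apply ENNReal.inv_mul_cancel
  · rw [Ne, Measure.measure_univ_eq_zero]
    exact Measure.toSphere_ne_zero _
  · exact measure_ne_top _ _

lemma isClosed_sph : IsClosed (sph n) := isClosed_sphere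
lemma isCompact_sph : IsCompact (sph n) := isCompact_sphere _ _

lemma ae_mem_sph : ∀ᵐ x ∂sphMeasure n, x ∈ sph n := by
  rw [sphMeasure_eq]
  apply Measure.ae_smul_measure
  refine (ae_map_iff measurable_subtype_coe.aemeasurable
    (p := fun x => x ∈ sph n) isClosed_sph.measurableSet).2 ?_
  exact ae_of_all _ fun x => x.2

lemma restrict_sph : (sphMeasure n).restrict (sph n) = sphMeasure n :=
  Measure.restrict_eq_self_of_ae_mem ae_mem_sph

open scoped Pointwise in
lemma measurePreserving_sphMeasure (L : E n ≃ₗᵢ[ℝ] E n) :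
    MeasurePreserving L (sphMeasure n) (sphMeasure n) := by
  refine ⟨L.continuous.measurable, ?_⟩
  rw [sphMeasure_eq, Measure.map_smul]
  congr 1
  ext s hs
  rw [Measure.map_apply L.continuous.measurable hs,
    Measure.map_apply measurable_subtype_coe (L.continuous.measurable hs),
    Measure.map_apply measurable_subtype_coe hs,
    Measure.toSphere_apply' _ (measurable_subtype_coe hs),
    Measure.toSphere_apply' _ (measurable_subtype_coe (L.continuous.measurable hs))]
  congr 1
  have : Set.Ioo (0 : ℝ) 1 • (Subtype.val '' ((Subtype.val : sphere (0 : E n) 1 → E n) ⁻¹' (L ⁻¹' s))) =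
      L ⁻¹' (Set.Ioo (0 : ℝ) 1 • (Subtype.val '' ((Subtype.val : sphere (0 : E n) 1 → E n) ⁻¹' s))) := by
    ext x
    simp only [Set.mem_smul, Set.mem_preimage, Set.mem_image, Subtype.exists, mem_sphere_zero_iff_norm]
    constructor
    · rintro ⟨r, hr, y, ⟨a, ha, hy, rfl⟩, rfl⟩
      exact ⟨r, hr, L a, ⟨L a, by simpa using ha, hy, rfl⟩, by simp⟩
    · rintro ⟨r, hr, y, ⟨a, ha, hy, rfl⟩, h⟩
      refine ⟨r, hr, L.symm a, ⟨L.symm a, by simpa using ha, by simpa using hy, rfl⟩, ?_⟩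
      rw [← L.symm_apply_apply x, ← h]; simp
  rw [this]
  exact L.measurePreserving.measure_preimage_equiv (f := L.toHomeomorph.toMeasurableEquiv) _

lemma integral_comp_isometry (L : E n ≃ₗᵢ[ℝ] E n) (w : E n → ℝ) :
    ∫ x, w (L x) ∂sphMeasure n = ∫ x, w x ∂sphMeasure n :=
  (measurePreserving_sphMeasure L).integral_comp L.toHomeomorph.measurableEmbedding w

lemma sphMeasure_pos [NeZero n] {U : Set (E n)} (hU : IsOpen U) (h : (U ∩ sph n).Nonempty) :
    0 < sphMeasure n U := by
  rw [sphMeasure_eq, Measure.smul_apply, Measure.map_apply measurable_subtype_coe hU.measurableSet,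
    smul_eq_mul]
  apply ENNReal.mul_pos
  · exact ENNReal.inv_ne_zero.2 (measure_ne_top _ _)
  · obtain ⟨x, hx, hx'⟩ := h
    exact ((hU.preimage continuous_subtype_val).measure_pos _ ⟨⟨x, hx'⟩, hx⟩).ne'

variable {w w' : E n → ℝ}

lemma integrable_sph [NeZero n] (h : ContinuousOn w (sph n)) : Integrable w (sphMeasure n) := by
  have := h.integrableOn_compact isCompact_sph (μ := sphMeasure n)
  rwa [IntegrableOn, restrict_sph] at this

lemma integral_congr_sph (h : ∀ x ∈ sph n, w x = w' x) :
    ∫ x, w x ∂sphMeasure n = ∫ x, w' x ∂sphMeasure n :=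
  integral_congr_ae (ae_mem_sph.mono fun x hx => h x hx)

lemma integral_mono_sph [NeZero n] (h : ContinuousOn w (sph n)) (h' : ContinuousOn w' (sph n))
    (hle : ∀ x ∈ sph n, w x ≤ w' x) :
    ∫ x, w x ∂sphMeasure n ≤ ∫ x, w' x ∂sphMeasure n :=
  integral_mono_ae (integrable_sph h) (integrable_sph h') (ae_mem_sph.mono fun x hx => hle x hx)

end measure

section rotation

/-- The generator of the rotations in the plane spanned by two basis vectors. -/
def rvec (i j : Fin n) (x : E n) : E n :=
  x i • EuclideanSpace.single j 1 - x j • EuclideanSpace.single i 1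

lemma rvec_apply (i j k : Fin n) (x : E n) :
    rvec i j x k = x i * (if k = j then 1 else 0) - x j * (if k = i then 1 else 0) := by
  simp [rvec]

lemma contDiff_rvec (i j : Fin n) : ContDiff ℝ ∞ (rvec i j : E n → E n) := by
  unfold rvec
  exact ((contDiff_coord i).smul contDiff_const).sub ((contDiff_coord j).smul contDiff_const)

lemma sum_smul_rvec {x : E n} (hx : x ∈ sph n) (j : Fin n) : ∑ i, x i • rvec i j x = tvec j x := by
  ext k
  simp only [WithLp.ofLp_sum, Finset.sum_apply, PiLp.smul_apply, tvec_apply, smul_eq_mul,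
    rvec_apply, mul_sub, Finset.sum_sub_distrib]
  have e1 : ∑ i, x i * (x i * if k = j then (1 : ℝ) else 0) = if k = j then 1 else 0 := by
    have : ∀ i, x i * (x i * if k = j then (1 : ℝ) else 0) = x i ^ 2 * if k = j then (1 : ℝ) else 0 :=
      fun i => by ring
    rw [Finset.sum_congr rfl fun i _ => this i, ← Finset.sum_mul, sum_sq_sph hx, one_mul]
  rw [e1]
  simp [eq_comm, mul_comm]

/-- Rotation in a coordinate plane, as a function. -/
def rotFun (i j : Fin n) (s : ℝ) (x : E n) : E n :=
  x + (Real.cos s - 1) • (x i • EuclideanSpace.single i 1 + x j • EuclideanSpace.single j 1)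
    + Real.sin s • rvec i j x

lemma rotFun_eq (i j : Fin n) (s : ℝ) (x : E n) : rotFun i j s x =
    x + (((Real.cos s - 1) * x i - Real.sin s * x j) • EuclideanSpace.single i 1
      + ((Real.cos s - 1) * x j + Real.sin s * x i) • EuclideanSpace.single j 1) := by
  unfold rotFun rvec; module

lemma norm_rotFun {i j : Fin n} (hij : i ≠ j) (s : ℝ) (x : E n) : ‖rotFun i j s x‖ = ‖x‖ := by
  rw [← sq_eq_sq₀ (norm_nonneg _) (norm_nonneg _), rotFun_eq, norm_add_sq_real, norm_add_sq_real]
  simp only [inner_add_right, inner_smul_right, inner_smul_left, EuclideanSpace.inner_single_right,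
    norm_smul, mul_pow, PiLp.norm_single, PiLp.single_apply, if_neg hij.symm, Real.norm_eq_abs, sq_abs]
  simp
  have := Real.sin_sq_add_cos_sq s
  linear_combination (x i ^ 2 + x j ^ 2) * this

/-- Rotation in a coordinate plane. -/
def rot {i j : Fin n} (hij : i ≠ j) (s : ℝ) : E n ≃ₗᵢ[ℝ] E n :=
  LinearIsometry.toLinearIsometryEquiv
    { toFun := rotFun i j s
      map_add' := fun x y => by simp only [rotFun, rvec, PiLp.add_apply]; module
      map_smul' := fun c x => by
        simp only [rotFun, rvec, PiLp.smul_apply, smul_eq_mul, RingHom.id_apply]; module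
      norm_map' := fun x => norm_rotFun hij s x } rfl

lemma rot_apply {i j : Fin n} (hij : i ≠ j) (s : ℝ) (x : E n) : rot hij s x = rotFun i j s x := rfl

lemma rotFun_zero (i j : Fin n) (x : E n) : rotFun i j 0 x = x := by simp [rotFun]

lemma rotFun_mem {i j : Fin n} (hij : i ≠ j) (s : ℝ) {x : E n} (hx : x ∈ sph n) :
    rotFun i j s x ∈ sph n := by
  have h : ‖x‖ = 1 := by simpa using hx
  simpa [sph, norm_rotFun hij] using h

lemma hasDerivAt_rotFun {i j : Fin n} (hij : i ≠ j) (s : ℝ) (x : E n) :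
    HasDerivAt (fun s => rotFun i j s x) (rvec i j (rotFun i j s x)) s := by
  have h1 := (((Real.hasDerivAt_cos s).sub_const 1).smul_const
    (x i • EuclideanSpace.single i (1 : ℝ) + x j • EuclideanSpace.single j (1 : ℝ))).const_add x
  have h2 := h1.add ((Real.hasDerivAt_sin s).smul_const (rvec i j x))
  refine h2.congr_deriv ?_
  ext k
  simp [rotFun, hij, hij.symm, rvec]
  split_ifs <;> ring

/-- Derivative along a rotation field. -/
def rX (i j : Fin n) (w : E n → ℝ) : E n → ℝ := fun x => fderiv ℝ w x (rvec i j x)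

variable {w a b : E n → ℝ}

lemma hasDerivAt_comp_rotFun {i j : Fin n} (hij : i ≠ j) {s : ℝ} {x : E n}
    (h : DifferentiableAt ℝ w (rotFun i j s x)) :
    HasDerivAt (fun s => w (rotFun i j s x)) (rX i j w (rotFun i j s x)) s :=
  h.hasFDerivAt.comp_hasDerivAt s (hasDerivAt_rotFun hij s x)

/-- `C¹` near every point of the sphere. -/
def C1 (w : E n → ℝ) : Prop := ∀ x ∈ sph n, ContDiffAt ℝ 1 w x

lemma Sm.C1 (h : Sm w) : C1 w := fun x hx => (h x hx).of_le (by simp)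

lemma C1.diff (h : C1 w) {x : E n} (hx : x ∈ sph n) : DifferentiableAt ℝ w x :=
  (h x hx).differentiableAt (by simp)

lemma C1.continuousOn (h : C1 w) : ContinuousOn w (sph n) :=
  fun x hx => (h x hx).continuousAt.continuousWithinAt

lemma C1.mul (h : C1 a) (h' : C1 b) : C1 (fun y => a y * b y) := fun x hx => (h x hx).mul (h' x hx)

lemma C1.continuousOn_fderiv (h : C1 w) : ContinuousOn (fderiv ℝ w) (sph n) := fun x hx =>
  ((h x hx).fderiv_right (m := 0) (by simp)).continuousAt.continuousWithinAt

lemma C1.continuousOn_rX (h : C1 w) (i j : Fin n) : ContinuousOn (rX i j w) (sph n) :=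
  h.continuousOn_fderiv.clm_apply (contDiff_rvec i j).continuous.continuousOn

lemma C1.continuousOn_tD (h : C1 w) (i : Fin n) : ContinuousOn (tD i w) (sph n) :=
  h.continuousOn_fderiv.clm_apply (contDiff_tvec i).continuous.continuousOn

lemma C1.continuousOn_sG (h : C1 w) : ContinuousOn (sG w) (sph n) :=
  continuousOn_finsetSum _ fun i _ => (h.continuousOn_tD i).pow 2

lemma integral_rX [NeZero n] (h : C1 w) (i j : Fin n) : ∫ x, rX i j w x ∂sphMeasure n = 0 := by
  rcases eq_or_ne i j with rfl | hij
  · simp [rX, rvec]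
  obtain ⟨C, hC⟩ := isCompact_sph.exists_bound_of_continuousOn (h.continuousOn_rX i j)
  have hm : ∀ s, Integrable (fun x => w (rotFun i j s x)) (sphMeasure n) := fun s =>
    integrable_sph (h.continuousOn.comp (rot hij s).continuous.continuousOn
      fun x hx => rotFun_mem hij s hx)
  have key := hasDerivAt_integral_of_dominated_loc_of_deriv_le (μ := sphMeasure n)
    (F := fun s x => w (rotFun i j s x)) (F' := fun s x => rX i j w (rotFun i j s x)) (x₀ := 0)
    (s := Set.univ) (bound := fun _ => C) Filter.univ_mem
    (Filter.Eventually.of_forall fun s => (hm s).aestronglyMeasurable) (hm 0)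
    (by simpa only [rotFun_zero] using (integrable_sph (h.continuousOn_rX i j)).aestronglyMeasurable)
    (ae_mem_sph.mono fun x hx s _ => hC _ (rotFun_mem hij s hx)) (integrable_const C)
    (ae_mem_sph.mono fun x hx s _ => hasDerivAt_comp_rotFun hij (h.diff (rotFun_mem hij s hx)))
  have hc : (fun s => ∫ x, w (rotFun i j s x) ∂sphMeasure n) = fun _ => ∫ x, w x ∂sphMeasure n := by
    funext s; exact integral_comp_isometry (rot hij s) w
  rw [hc] at key
  have := key.2.unique (hasDerivAt_const _ _)
  simpa only [rotFun_zero] using this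

lemma sum_mul_rX {x : E n} (hx : x ∈ sph n) (w : E n → ℝ) (j : Fin n) :
    ∑ i, x i * rX i j w x = tD j w x := by
  have := congrArg (fderiv ℝ w x) (sum_smul_rvec hx j)
  simpa [rX, tD] using this

lemma rX_eq_tD (i j : Fin n) (w : E n → ℝ) (x : E n) :
    rX i j w x = x i * tD j w x - x j * tD i w x := by
  simp only [rX, tD, rvec, tvec, map_sub, map_smul, smul_eq_mul]; ring

lemma integral_tD [NeZero n] (h : C1 w) (j : Fin n) :
    ∫ x, tD j w x ∂sphMeasure n = (n - 1) * ∫ x, x j * w x ∂sphMeasure n := by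
  have hc : ∀ i, C1 (fun x : E n => x i * w x) := fun i => (Sm.coord i).C1.mul h
  have h1 : ∑ i, ∫ x, rX i j (fun x : E n => x i * w x) x ∂sphMeasure n = 0 :=
    Finset.sum_eq_zero fun i _ => integral_rX (hc i) i j
  rw [← integral_finsetSum _ fun i _ => integrable_sph ((hc i).continuousOn_rX i j),
    integral_congr_sph (w' := fun x => tD j w x - (n - 1) * (x j * w x)), integral_sub,
    integral_const_mul, sub_eq_zero] at h1
  · exact h1
  · exact integrable_sph (h.continuousOn_tD j)
  · exact (integrable_sph (hc j).continuousOn).const_mul _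
  · intro x hx
    have e : ∀ i, rX i j (fun x : E n => x i * w x) x =
        x i * rX i j w x + (w x * x i * (if i = j then 1 else 0) - w x * x j) := by
      intro i
      have := fderiv_fun_mul (differentiableAt_coord i x) (h.diff hx)
      simp only [rX, this, add_apply, smul_apply,
        fderiv_coord, rvec_apply, smul_eq_mul, if_true]
      ring
    rw [Finset.sum_congr rfl fun i _ => e i, Finset.sum_add_distrib, sum_mul_rX hx,
      Finset.sum_sub_distrib]
    simp
    ring

/-- Green's formula on the sphere. -/
lemma integral_mul_sL [NeZero n] (ha : Sm a) (hb : Sm b) :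
    ∫ x, a x * sL b x ∂sphMeasure n = - ∫ x, ∑ j, tD j a x * tD j b x ∂sphMeasure n := by
  have hs : ∀ j, Sm (fun x => a x * tD j b x) := fun j => ha.mul hb.tD
  have h1 : ∑ j, ∫ x, tD j (fun x => a x * tD j b x) x ∂sphMeasure n =
      ∑ j, (n - 1) * ∫ x, x j * (a x * tD j b x) ∂sphMeasure n :=
    Finset.sum_congr rfl fun j _ => integral_tD (hs j).C1 j
  have e2 : ∫ x, ∑ j, x j * (a x * tD j b x) ∂sphMeasure n = 0 := by
    rw [integral_congr_sph (w' := fun _ => 0), integral_zero]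
    intro x hx
    have := congrArg (a x * ·) (sum_coord_tD hx b)
    simp only [Finset.mul_sum, mul_zero] at this
    rw [← this]; exact Finset.sum_congr rfl fun i _ => by ring
  rw [← Finset.mul_sum,
    ← integral_finsetSum _ fun j _ => integrable_sph ((Sm.coord j).mul (hs j)).continuousOn, e2,
    mul_zero, ← integral_finsetSum _ fun j _ => integrable_sph (hs j).tD.continuousOn,
    integral_congr_sph (w' := fun x => a x * sL b x + ∑ j, tD j a x * tD j b x), integral_add] at h1
  · linarith
  · exact integrable_sph (ha.mul hb.sL).continuousOn
  · exact integrable_sph (Sm.sum fun j _ => ha.tD.mul hb.tD).continuousOn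
  · intro x hx
    simp only [tD_mul (ha.diff hx) (hb.tD.diff hx), Finset.sum_add_distrib, sL, Finset.mul_sum]
    congr 1
    exact Finset.sum_congr rfl fun i _ => by ring

end rotation

section key
variable {g : E n → ℝ}

lemma integral_sH [NeZero n] (h : Sm g) : ∫ x, sH g x ∂sphMeasure n =
    ∫ x, sL g x ^ 2 ∂sphMeasure n - (n - 3) * ∫ x, sG g x ∂sphMeasure n := by
  have h1 := integral_mul_sL (Sm.const 1) h.sG
  have h2 := integral_mul_sL h.sL h
  have e1 : ∀ j (x : E n), tD j (fun _ => (1 : ℝ)) x = 0 := fun j x => by simp [tD]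
  simp only [one_mul, e1, zero_mul, Finset.sum_const_zero, integral_zero, neg_zero] at h1
  have hH : Sm (sH g) := Sm.sum fun _ _ => h.tD.sG
  have hD : Sm (fun x => ∑ j, tD j (sL g) x * tD j g x) := Sm.sum fun _ _ => h.sL.tD.mul h.tD
  rw [integral_congr_sph (w' := fun x => 2 * (∑ j, tD j (sL g) x * tD j g x)
    + (2 * (n - 3) * sG g x + 2 * sH g x)), integral_add, integral_add, integral_const_mul,
    integral_const_mul, integral_const_mul] at h1
  · have e2 : ∫ x, sL g x ^ 2 ∂sphMeasure n = ∫ x, sL g x * sL g x ∂sphMeasure n := by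
      simp only [sq]
    rw [e2]
    linarith
  · exact (integrable_sph h.sG.continuousOn).const_mul _
  · exact (integrable_sph hH.continuousOn).const_mul _
  · exact (integrable_sph hD.continuousOn).const_mul _
  · exact ((integrable_sph h.sG.continuousOn).const_mul _).add
      ((integrable_sph hH.continuousOn).const_mul _)
  · intro x hx
    rw [sL_sG h hx]
    simp only [mul_comm (tD _ (sL g) x)]
    ring

lemma sC_eq (h : Sm g) {x : E n} (hx : x ∈ sph n) :
    ∑ i, tD i (sG g) x * tD i g x = 2 * sC g x := by
  have e : ∀ i, tD i (sG g) x = 2 * ∑ j, tD j g x * tD i (tD j g) x := by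
    intro i
    have : sG g = fun y => ∑ j, tD j g y ^ 2 := rfl
    rw [this, tD_sum _ fun j _ => (h.tD.pow 2).diff hx, Finset.mul_sum]
    exact Finset.sum_congr rfl fun j _ => by rw [tD_sq (h.tD.diff hx)]; ring
  simp only [e, sC, Finset.mul_sum, Finset.sum_mul]
  rw [Finset.sum_comm]
  exact Finset.sum_congr rfl fun j _ => Finset.sum_congr rfl fun i _ => by ring

lemma Sm.sC (h : Sm g) : Sm (sC g) :=
  Sm.sum fun _ _ => Sm.sum fun _ _ => (h.tD.tD.mul h.tD).mul h.tD

lemma integral_sC [NeZero n] (h : Sm g) (hg : ∀ x ∈ sph n, 0 < g x) :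
    2 * ∫ x, sC g x / g x ∂sphMeasure n = ∫ x, sG g x ^ 2 / g x ^ 2 ∂sphMeasure n
      - ∫ x, sG g x * sL g x / g x ∂sphMeasure n := by
  have h0 : ∀ x ∈ sph n, g x ≠ 0 := fun x hx => (hg x hx).ne'
  have h1 := integral_mul_sL (h.sG.div h h0) h
  have h02 : ∀ x ∈ sph n, g x ^ 2 ≠ 0 := fun x hx => pow_ne_zero 2 (h0 x hx)
  rw [integral_congr_sph (w' := fun x => sG g x * sL g x / g x) (fun x _ => by ring),
    integral_congr_sph (w := fun x => ∑ j, tD j (fun y => sG g y / g y) x * tD j g x)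
      (w' := fun x => 2 * (sC g x / g x) - sG g x ^ 2 / g x ^ 2), integral_sub,
    integral_const_mul] at h1
  · linarith
  · exact (integrable_sph (h.sC.div h h0).continuousOn).const_mul _
  · exact integrable_sph ((h.sG.pow 2).div (h.pow 2) h02).continuousOn
  · intro x hx
    have e : ∀ j, tD j (fun y => sG g y / g y) x =
        tD j (sG g) x / g x - sG g x * tD j g x / g x ^ 2 := by
      intro j
      have hi : tD j (fun y => (g y)⁻¹) x = - (g x ^ 2)⁻¹ * tD j g x :=
        tD_comp (φ := fun s => s⁻¹) (hasDerivAt_inv (h0 x hx)) (h.diff hx)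
      simp only [div_eq_mul_inv]
      rw [tD_mul (h.sG.diff hx) ((h.diff hx).fun_inv (h0 x hx)), hi]
      ring
    have e2 : ∀ j, tD j (fun y => sG g y / g y) x * tD j g x =
        (g x)⁻¹ * (tD j (sG g) x * tD j g x) - sG g x * (g x ^ 2)⁻¹ * tD j g x ^ 2 := by
      intro j; rw [e]; ring
    rw [Finset.sum_congr rfl fun j _ => e2 j, Finset.sum_sub_distrib, ← Finset.mul_sum,
      ← Finset.mul_sum, sC_eq h hx]
    change _ - _ * sG g x = _
    ring

/-- The integrated curvature-dimension inequality on the sphere. -/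
lemma integral_key (hn : 3 ≤ n) (h : Sm g) (hg : ∀ x ∈ sph n, 0 < g x) :
    (n - 1) * ∫ x, sG g x ∂sphMeasure n ≤ ∫ x, sL g x ^ 2 ∂sphMeasure n
      + ∫ x, sG g x * sL g x / g x ∂sphMeasure n := by
  have : NeZero n := ⟨by omega⟩
  have hn' : (3 : ℝ) ≤ n := by exact_mod_cast hn
  have h0 : ∀ x ∈ sph n, g x ≠ 0 := fun x hx => (hg x hx).ne'
  have h02 : ∀ x ∈ sph n, g x ^ 2 ≠ 0 := fun x hx => pow_ne_zero 2 (h0 x hx)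
  set c : ℝ := -((n - 2) / (n + 1)) with hc
  have i1 := integrable_sph (h.sL.pow 2).continuousOn
  have i2 := integrable_sph ((h.sG.mul h.sL).div h h0).continuousOn
  have i3 := integrable_sph ((h.sG.pow 2).div (h.pow 2) h02).continuousOn
  have i4 := integrable_sph h.sG.continuousOn
  have i5 := integrable_sph (h.sC.div h h0).continuousOn
  have hH : Sm (sH g) := Sm.sum fun _ _ => h.tD.sG
  have i6 := integrable_sph hH.continuousOn
  have hle : ∫ x, (sL g x ^ 2 + 2 * c * (sG g x * sL g x / g x) + c ^ 2 * (sG g x ^ 2 / g x ^ 2))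
      ∂sphMeasure n ≤ ∫ x, (n - 1) * (sH g x - sG g x + 2 * c * (sC g x / g x)
        + c ^ 2 * (sG g x ^ 2 / g x ^ 2)) ∂sphMeasure n := by
    refine integral_mono_ae ((i1.add (i2.const_mul _)).add (i3.const_mul _))
      ((((i6.sub i4).add (i5.const_mul _)).add (i3.const_mul _)).const_mul _)
      (ae_mem_sph.mono fun x hx => ?_)
    have := trace_sq_le h hx (c / g x)
    have hgx := h0 x hx
    calc _ = (sL g x + c / g x * sG g x) ^ 2 := by ring
      _ ≤ _ := this
      _ = _ := by ring
  have e1 : ∫ x, (sL g x ^ 2 + 2 * c * (sG g x * sL g x / g x) + c ^ 2 * (sG g x ^ 2 / g x ^ 2))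
      ∂sphMeasure n = ∫ x, sL g x ^ 2 ∂sphMeasure n
        + 2 * c * ∫ x, sG g x * sL g x / g x ∂sphMeasure n
        + c ^ 2 * ∫ x, sG g x ^ 2 / g x ^ 2 ∂sphMeasure n := by
    rw [integral_add (by exact i1.add (i2.const_mul _)) (i3.const_mul _), integral_add i1 (i2.const_mul _),
      integral_const_mul, integral_const_mul]
  have e2 : ∫ x, (n - 1) * (sH g x - sG g x + 2 * c * (sC g x / g x)
        + c ^ 2 * (sG g x ^ 2 / g x ^ 2)) ∂sphMeasure n = (n - 1) * (∫ x, sH g x ∂sphMeasure n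
        - ∫ x, sG g x ∂sphMeasure n + 2 * c * ∫ x, sC g x / g x ∂sphMeasure n
        + c ^ 2 * ∫ x, sG g x ^ 2 / g x ^ 2 ∂sphMeasure n) := by
    rw [integral_const_mul, integral_add (by exact (i6.sub i4).add (i5.const_mul _))
      (i3.const_mul _), integral_add (by exact i6.sub i4) (i5.const_mul _), integral_sub i6 i4, integral_const_mul,
      integral_const_mul]
  have hA : 0 ≤ ∫ x, sG g x ^ 2 / g x ^ 2 ∂sphMeasure n :=
    integral_nonneg fun x => by positivity
  have e3 := integral_sC h hg
  rw [e1, e2, integral_sH h] at hle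
  set Y := ∫ x, sL g x ^ 2 ∂sphMeasure n
  set G := ∫ x, sG g x ∂sphMeasure n
  set A := ∫ x, sG g x ^ 2 / g x ^ 2 ∂sphMeasure n
  set B := ∫ x, sG g x * sL g x / g x ∂sphMeasure n
  set C := ∫ x, sC g x / g x ∂sphMeasure n
  have hcn : c * (n + 1) = -(n - 2) := by rw [hc]; field_simp
  have hc0 : c ≤ 0 := by
    rw [hc, neg_nonpos]; exact div_nonneg (by linarith) (by linarith)
  have hc1 : -1 ≤ c := by
    rw [hc, neg_le_neg_iff, div_le_one (by linarith)]; linarith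
  have hk : 0 ≤ (n - 2) * (Y + B - (n - 1) * G) + c * ((n - 1) + c * (n - 2)) * A := by
    have : c * (n - 1) * B + 2 * c * B = - (n - 2) * B := by rw [← hcn]; ring
    have : (n - 1) * (2 * c * C) = (n - 1) * (c * (A - B)) := by rw [← e3]; ring
    nlinarith
  have hneg : c * ((n - 1) + c * (n - 2)) * A ≤ 0 := by
    refine mul_nonpos_of_nonpos_of_nonneg (mul_nonpos_of_nonpos_of_nonneg hc0 ?_) hA
    nlinarith
  have : 0 ≤ (n - 2) * (Y + B - (n - 1) * G) := by linarith
  have := nonneg_of_mul_nonneg_right this (by linarith : (0 : ℝ) < n - 2)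
  linarith

end key

section fields
variable {w w' : E n → ℝ} {x : E n}

lemma rX_congr_sph (h : DifferentiableAt ℝ w x) (h' : DifferentiableAt ℝ w' x) (hx : x ∈ sph n)
    (he : ∀ y ∈ sph n, w y = w' y) (i j : Fin n) : rX i j w x = rX i j w' x := by
  rcases eq_or_ne i j with rfl | hij
  · simp [rX, rvec]
  have h1 := hasDerivAt_comp_rotFun hij (w := w) (s := 0) (x := x) (by rwa [rotFun_zero])
  have h2 := hasDerivAt_comp_rotFun hij (w := w') (s := 0) (x := x) (by rwa [rotFun_zero])
  rw [rotFun_zero] at h1 h2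
  have : (fun s => w (rotFun i j s x)) = fun s => w' (rotFun i j s x) := by
    funext s; exact he _ (rotFun_mem hij s hx)
  rw [this] at h1
  exact h1.unique h2

lemma tD_congr_sph (h : DifferentiableAt ℝ w x) (h' : DifferentiableAt ℝ w' x) (hx : x ∈ sph n)
    (he : ∀ y ∈ sph n, w y = w' y) (i : Fin n) : tD i w x = tD i w' x := by
  rw [← sum_mul_rX hx, ← sum_mul_rX hx]
  exact Finset.sum_congr rfl fun j _ => by rw [rX_congr_sph h h' hx he]

lemma Sm.rX (h : Sm w) (i j : Fin n) : Sm (rX i j w) := fun x hx =>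
  ((h x hx).fderiv_right (by simp)).clm_apply (contDiff_rvec i j).contDiffAt

lemma sum_rX_rX (h : Sm w) (hx : x ∈ sph n) : ∑ i, ∑ j, rX i j (rX i j w) x = 2 * sL w x := by
  have e1 : ∀ i j, tD j (rX i j w) x = x i * tD j (tD j w) x + tD j w x * (if i = j then 1 else 0)
      - tD j w x * (x i * x j) - x j * tD j (tD i w) x - tD i w x * (1 - x j ^ 2) := by
    intro i j
    have : rX i j w = fun y => y i * tD j w y - y j * tD i w y := funext (rX_eq_tD i j w)
    rw [this, tD_sub (((Sm.coord i).mul h.tD).diff hx) (((Sm.coord j).mul h.tD).diff hx),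
      tD_mul ((Sm.coord i).diff hx) (h.tD.diff hx), tD_mul ((Sm.coord j).diff hx) (h.tD.diff hx),
      tD_coord, tD_coord, if_pos rfl]
    simp only [eq_comm (a := j)]
    ring
  have e2 : ∀ j, ∑ i, x i * tD j (rX i j w) x = tD j (tD j w) x + x j * tD j w x := by
    intro j
    have s1 := sum_sq_sph hx
    have s2 := sum_coord_tD hx w
    have s3 := sum_coord_tD_tD hx (h.two hx) j
    have : ∀ i, x i * tD j (rX i j w) x = x i ^ 2 * tD j (tD j w) x +
        (if i = j then x i * tD j w x else 0) - x i ^ 2 * (tD j w x * x j)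
        - x j * (x i * tD j (tD i w) x) - (x i * tD i w x) * (1 - x j ^ 2) := by
      intro i; rw [e1]; split_ifs <;> ring
    rw [Finset.sum_congr rfl fun i _ => this i]
    simp only [Finset.sum_sub_distrib, Finset.sum_add_distrib, ← Finset.mul_sum, ← Finset.sum_mul,
      s1, s2, s3]
    simp
    ring
  have e3 : ∑ i, ∑ j, x i * tD j (rX i j w) x = sL w x := by
    rw [Finset.sum_comm, Finset.sum_congr rfl fun j _ => e2 j, Finset.sum_add_distrib,
      sum_coord_tD hx]
    simp [sL]
  have e4 : ∑ i, ∑ j, x j * tD i (rX j i w) x = sL w x := by rw [Finset.sum_comm]; exact e3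
  have e5 : ∀ i j, rX i j (rX i j w) x = x i * tD j (rX i j w) x + x j * tD i (rX j i w) x := by
    intro i j
    have : rX j i w = fun y => (-1) * rX i j w y := by
      funext y; rw [rX_eq_tD, rX_eq_tD]; ring
    rw [this, tD_const_mul _ ((h.rX i j).diff hx), rX_eq_tD]
    ring
  simp only [e5, Finset.sum_add_distrib, e3, e4]
  ring

end fields

section polynomials

/-- Polynomial functions of degree at most `k`. -/
def poly (n : ℕ) : ℕ → Submodule ℝ (E n → ℝ)
  | 0 => Submodule.span ℝ {1}
  | k + 1 => poly n k ⊔ ⨆ i : Fin n, (poly n k).map (LinearMap.mulLeft ℝ fun x : E n => x i)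

lemma poly_le_succ (k : ℕ) : poly n k ≤ poly n (k + 1) := le_sup_left

lemma coord_mul_mem_poly {k : ℕ} {p : E n → ℝ} (hp : p ∈ poly n k) (i : Fin n) :
    (fun x : E n => x i * p x) ∈ poly n (k + 1) :=
  Submodule.mem_sup_right (Submodule.mem_iSup_of_mem i ⟨p, hp, rfl⟩)

instance (k : ℕ) : FiniteDimensional ℝ (poly n k) := by
  induction k with
  | zero => exact FiniteDimensional.span_singleton ℝ _
  | succ k ih =>
    change FiniteDimensional ℝ
      ↥(poly n k ⊔ ⨆ i : Fin n, (poly n k).map (LinearMap.mulLeft ℝ fun x : E n => x i))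
    infer_instance

/-- The smooth functions whose derivative along a rotation field lies in `V`. -/
def rXPreimage (i j : Fin n) (V : Submodule ℝ (E n → ℝ)) : Submodule ℝ (E n → ℝ) where
  carrier := {w | ContDiff ℝ ∞ w ∧ rX i j w ∈ V}
  add_mem' := by
    rintro a b ⟨ha, ha'⟩ ⟨hb, hb'⟩
    refine ⟨ha.add hb, ?_⟩
    have : rX i j (a + b) = rX i j a + rX i j b := by
      funext x
      simp [rX, fderiv_add ((ha.differentiable (by simp)) x) ((hb.differentiable (by simp)) x)]
    rw [this]; exact V.add_mem ha' hb'
  zero_mem' := by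
    refine ⟨contDiff_const, ?_⟩
    have : rX i j (0 : E n → ℝ) = 0 := by funext x; simp [rX]
    rw [this]; exact V.zero_mem
  smul_mem' := by
    rintro c a ⟨ha, ha'⟩
    refine ⟨contDiff_const.smul ha, ?_⟩
    have : rX i j (c • a) = c • rX i j a := by
      funext x
      simp [rX, fderiv_const_smul ((ha.differentiable (by simp)) x)]
    rw [this]; exact V.smul_mem _ ha'

lemma poly_le_rXPreimage (i j : Fin n) (k : ℕ) : poly n k ≤ rXPreimage i j (poly n k) := by
  induction k with
  | zero =>
    refine Submodule.span_le.2 ?_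
    rintro _ rfl
    refine ⟨contDiff_const, ?_⟩
    have : rX i j (1 : E n → ℝ) = 0 := by funext x; simp [rX]
    rw [this]; exact Submodule.zero_mem _
  | succ k ih =>
    refine sup_le (fun w hw => ⟨(ih hw).1, poly_le_succ k (ih hw).2⟩) (iSup_le fun l => ?_)
    rintro _ ⟨p, hp, rfl⟩
    obtain ⟨h1, h2⟩ := ih hp
    refine ⟨(contDiff_coord l).mul h1, ?_⟩
    have : rX i j (LinearMap.mulLeft ℝ (fun x : E n => x l) p) = (fun x : E n => x l * rX i j p x)
        + ((if l = j then (1 : ℝ) else 0) • (fun x : E n => x i * p x)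
          - (if l = i then (1 : ℝ) else 0) • (fun x : E n => x j * p x)) := by
      funext x
      have := fderiv_fun_mul (differentiableAt_coord l x) ((h1.differentiable (by simp)) x)
      have e : LinearMap.mulLeft ℝ (fun x : E n => x l) p = fun x => x l * p x := rfl
      simp only [rX, e, this, add_apply, smul_apply, fderiv_coord, rvec_apply, smul_eq_mul,
        Pi.add_apply, Pi.sub_apply, Pi.smul_apply]
      ring
    rw [this]
    exact Submodule.add_mem _ (coord_mul_mem_poly h2 l) (Submodule.sub_mem _
      (Submodule.smul_mem _ _ (coord_mul_mem_poly hp i))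
      (Submodule.smul_mem _ _ (coord_mul_mem_poly hp j)))

lemma rX_mem_poly {k : ℕ} {p : E n → ℝ} (hp : p ∈ poly n k) (i j : Fin n) : rX i j p ∈ poly n k :=
  (poly_le_rXPreimage i j k hp).2

lemma contDiff_of_mem_poly {k : ℕ} {p : E n → ℝ} (hp : p ∈ poly n k) : ContDiff ℝ ∞ p := by
  cases k with
  | zero =>
    obtain ⟨c, rfl⟩ := Submodule.mem_span_singleton.1 hp
    exact contDiff_const (c := c • (1 : ℝ))
  | succ k =>
    rcases n.eq_zero_or_pos with rfl | hn
    · have : p = fun _ => p 0 := funext fun x => by rw [Subsingleton.elim x 0]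
      rw [this]; exact contDiff_const
    · exact (poly_le_rXPreimage ⟨0, hn⟩ ⟨0, hn⟩ (k + 1) hp).1

lemma exists_sL_mem_poly {k : ℕ} {p : E n → ℝ} (hp : p ∈ poly n k) :
    ∃ q ∈ poly n k, ∀ x ∈ sph n, sL p x = q x := by
  refine ⟨(1 / 2 : ℝ) • ∑ i, ∑ j, rX i j (rX i j p), Submodule.smul_mem _ _
    (Submodule.sum_mem _ fun i _ => Submodule.sum_mem _ fun j _ =>
      rX_mem_poly (rX_mem_poly hp i j) i j), fun x hx => ?_⟩
  have := sum_rX_rX (fun y _ => (contDiff_of_mem_poly hp).contDiffAt) hx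
  simp [Finset.sum_apply, this]

end polynomials

section flow

/-- A family of functions, smooth on the sphere, solving the heat equation there. -/
structure IsHeatFlow (u : ℝ → E n → ℝ) : Prop where
  sm : ∀ t, Sm (u t)
  deriv : ∀ t, ∀ x ∈ sph n, HasDerivAt (fun t => u t x) (sL (u t) x) t
  deriv_tD : ∀ i t, ∀ x ∈ sph n, HasDerivAt (fun t => tD i (u t) x) (tD i (sL (u t)) x) t
  cont : ContinuousOn (fun q : ℝ × E n => u q.1 q.2) (Set.univ ×ˢ sph n)
  cont_tD : ∀ i, ContinuousOn (fun q : ℝ × E n => tD i (u q.1) q.2) (Set.univ ×ˢ sph n)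
  cont_sL : ContinuousOn (fun q : ℝ × E n => sL (u q.1) q.2) (Set.univ ×ˢ sph n)
  cont_tD_sL : ∀ i, ContinuousOn (fun q : ℝ × E n => tD i (sL (u q.1)) q.2) (Set.univ ×ˢ sph n)

lemma continuousOn_finite_sum {ι : Type*} [Fintype ι] {c : ℝ → ι → ℝ} {b : ι → E n → ℝ}
    (hc : Continuous c) (hb : ∀ i, ContinuousOn (b i) (sph n)) :
    ContinuousOn (fun q : ℝ × E n => ∑ i, c q.1 i * b i q.2) (Set.univ ×ˢ sph n) :=
  continuousOn_finsetSum _ fun i _ =>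
    (((continuous_apply i).comp hc).comp continuous_fst).continuousOn.mul
      ((hb i).comp continuousOn_snd fun _ hq => hq.2)

lemma exists_heatFlow {k : ℕ} {p : E n → ℝ} (hp : p ∈ poly n k) :
    ∃ u : ℝ → E n → ℝ, IsHeatFlow u ∧ u 0 = p := by
  let V := poly n k
  let B := Module.finBasis ℝ V
  let m := Module.finrank ℝ V
  let b : Fin m → E n → ℝ := fun i => (B i : E n → ℝ)
  have hb : ∀ i, Sm (b i) := fun i x _ => (contDiff_of_mem_poly (B i).2).contDiffAt
  have hrep : ∀ q ∈ V, ∃ a : Fin m → ℝ, q = fun x => ∑ i, a i * b i x := by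
    intro q hq
    refine ⟨fun i => B.repr ⟨q, hq⟩ i, ?_⟩
    have := congrArg (Subtype.val) (B.sum_repr ⟨q, hq⟩)
    funext x
    refine (congrFun this x).symm.trans ?_
    rw [Submodule.coe_sum, Finset.sum_apply]
    rfl
  have hT : ∀ i, ∃ a : Fin m → ℝ, ∀ x ∈ sph n, sL (b i) x = ∑ j, a j * b j x := by
    intro i
    obtain ⟨q, hq, hq'⟩ := exists_sL_mem_poly (B i).2
    obtain ⟨a, rfl⟩ := hrep q hq
    exact ⟨a, hq'⟩
  choose T hT using hT
  obtain ⟨a, ha⟩ := hrep p hp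
  let A : (Fin m → ℝ) →L[ℝ] (Fin m → ℝ) :=
    LinearMap.toContinuousLinearMap (Matrix.toLin' (Matrix.of T).transpose)
  let c : ℝ → Fin m → ℝ := fun t => NormedSpace.exp (t • A) a
  have hc : ∀ t, HasDerivAt c (A (c t)) t := by
    intro t
    have := (hasDerivAt_exp_smul_const' (𝕂 := ℝ) A t).clm_apply (hasDerivAt_const t a)
    simpa [c] using this
  have hcc : Continuous c := continuous_iff_continuousAt.2 fun t => (hc t).continuousAt
  have hA : ∀ v j, A v j = ∑ i, v i * T i j := by
    intro v j
    simp [A, Matrix.mulVec, dotProduct, mul_comm]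
  have hci : ∀ t i, HasDerivAt (fun t => c t i) (A (c t) i) t := fun t i =>
    (hasDerivAt_pi.1 (hc t)) i
  let u : ℝ → E n → ℝ := fun t x => ∑ i, c t i * b i x
  have hcomb : ∀ v : Fin m → ℝ, Sm (fun x => ∑ i, v i * b i x) := fun v =>
    Sm.sum fun i _ => (Sm.const (v i)).mul (hb i)
  have hu : ∀ t, Sm (u t) := fun t => hcomb _
  have htD : ∀ (v : Fin m → ℝ) i, ∀ x ∈ sph n,
      tD i (fun x => ∑ l, v l * b l x) x = ∑ l, v l * tD i (b l) x := by
    intro v i x hx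
    rw [tD_sum _ fun l _ => ((Sm.const (v l)).mul (hb l)).diff hx]
    exact Finset.sum_congr rfl fun l _ => tD_const_mul _ ((hb l).diff hx)
  have hL : ∀ t, ∀ x ∈ sph n, sL (u t) x = ∑ j, A (c t) j * b j x := by
    intro t x hx
    have h1 : ∀ l, sL (fun x => c t l * b l x) x = c t l * sL (b l) x := by
      intro l
      rw [sL_mul (Sm.const _) (hb l) hx]
      have : ∀ i, tD i (fun _ : E n => c t l) = fun _ => 0 := fun i => by funext y; simp [tD]
      have h0 : ∀ i (y : E n), tD i (fun _ : E n => (0 : ℝ)) y = 0 := fun i y => by simp [tD]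
      simp [sL, this, h0]
    change sL (fun x => ∑ l, c t l * b l x) x = _
    rw [sL_sum (fun l _ => (Sm.const (c t l)).mul (hb l)) hx]
    simp only [h1, hT _ x hx, hA, Finset.mul_sum, Finset.sum_mul]
    rw [Finset.sum_comm]
    exact Finset.sum_congr rfl fun i _ => Finset.sum_congr rfl fun j _ => by ring
  have htL : ∀ t i, ∀ x ∈ sph n, tD i (sL (u t)) x = ∑ j, A (c t) j * tD i (b j) x := by
    intro t i x hx
    rw [tD_congr_sph ((hu t).sL.diff hx) ((hcomb (A (c t))).diff hx) hx (hL t), htD _ _ x hx]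
  refine ⟨u, ⟨hu, ?_, ?_, ?_, ?_, ?_, ?_⟩, ?_⟩
  · intro t x hx
    rw [hL t x hx]
    exact HasDerivAt.fun_sum fun i _ => (hci t i).mul_const _
  · intro i t x hx
    rw [htL t i x hx]
    simp only [u, htD _ i x hx]
    exact HasDerivAt.fun_sum fun l _ => (hci t l).mul_const _
  · exact continuousOn_finite_sum hcc fun i => (hb i).continuousOn
  · intro i
    exact (continuousOn_finite_sum hcc fun l => (hb l).tD.continuousOn).congr
      fun q hq => htD _ i q.2 hq.2
  · exact (continuousOn_finite_sum (A.continuous.comp hcc) fun l => (hb l).continuousOn).congr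
      fun q hq => hL _ _ hq.2
  · intro i
    exact (continuousOn_finite_sum (A.continuous.comp hcc) fun l => (hb l).tD.continuousOn).congr
      fun q hq => htL _ _ _ hq.2
  · rw [ha]
    funext x
    simp [u, c]

end flow

section maximum
variable {w : E n → ℝ} {x : E n}

lemma sL_const_mul (c : ℝ) (h : Sm w) (hx : x ∈ sph n) : sL (fun y => c * w y) x = c * sL w x := by
  rw [sL_mul (Sm.const c) h hx]
  have : ∀ i, tD i (fun _ : E n => c) = fun _ => 0 := fun i => by funext y; simp [tD]
  have h0 : ∀ i (y : E n), tD i (fun _ : E n => (0 : ℝ)) y = 0 := fun i y => by simp [tD]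
  have h1 : sL (fun _ : E n => c) x = 0 := by simp only [sL, this, h0, Finset.sum_const_zero]
  simp [h1, this]

lemma rX_rX_nonpos_of_max (h : Sm w) (hx : x ∈ sph n) (hmax : ∀ y ∈ sph n, w y ≤ w x)
    (i j : Fin n) : rX i j (rX i j w) x ≤ 0 := by
  rcases eq_or_ne i j with rfl | hij
  · simp [rX, rvec]
  by_contra! hpos
  let φ : ℝ → ℝ := fun s => w (rotFun i j s x)
  have h1 : deriv φ = fun s => rX i j w (rotFun i j s x) := funext fun s =>
    (hasDerivAt_comp_rotFun hij (h.diff (rotFun_mem hij s hx))).deriv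
  have h2 : deriv (deriv φ) 0 = rX i j (rX i j w) x := by
    rw [h1, (hasDerivAt_comp_rotFun hij ((h.rX i j).diff (rotFun_mem hij 0 hx))).deriv, rotFun_zero]
  have hφ : Continuous φ := continuous_iff_continuousAt.2 fun s =>
    (hasDerivAt_comp_rotFun hij (h.diff (rotFun_mem hij s hx))).continuousAt
  have hM : IsLocalMax φ 0 := Eventually.of_forall fun s => by
    simpa only [φ, rotFun_zero] using hmax _ (rotFun_mem hij s hx)
  have hm : IsLocalMin φ 0 :=
    isLocalMin_of_deriv_deriv_pos (by rwa [h2]) hM.deriv_eq_zero hφ.continuousAt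
  have hc : φ =ᶠ[𝓝 0] fun _ => φ 0 := by
    filter_upwards [hM, hm] with s h1 h2 using le_antisymm h1 h2
  have := hc.deriv.deriv_eq
  simp only [deriv_const', deriv_const] at this
  rw [h2] at this
  exact hpos.ne' this

lemma sL_nonpos_of_max (h : Sm w) (hx : x ∈ sph n) (hmax : ∀ y ∈ sph n, w y ≤ w x) :
    sL w x ≤ 0 := by
  have h1 := sum_rX_rX h hx
  have h2 : ∑ i, ∑ j, rX i j (rX i j w) x ≤ 0 :=
    Finset.sum_nonpos fun i _ => Finset.sum_nonpos fun j _ => rX_rX_nonpos_of_max h hx hmax i j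
  linarith

lemma nonneg_of_max_right {φ : ℝ → ℝ} {a T t : ℝ} (h : HasDerivAt φ a t) (ht : 0 < t) (htT : t ≤ T)
    (hmax : ∀ s ∈ Set.Icc 0 T, φ s ≤ φ t) : 0 ≤ a := by
  have h1 := h.hasDerivWithinAt (s := Set.Iic t)
  have h2 : IsLocalMaxOn φ (Set.Iic t) t := by
    have : Set.Ioi 0 ∈ 𝓝[Set.Iic t] t := mem_nhdsWithin_of_mem_nhds (Ioi_mem_nhds ht)
    filter_upwards [this, self_mem_nhdsWithin] with s hs hs'
    exact hmax s ⟨le_of_lt hs, hs'.trans htT⟩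
  have hy : (-1 : ℝ) ∈ posTangentConeAt (Set.Iic t) t := by
    apply mem_posTangentConeAt_of_segment_subset
    rw [segment_eq_uIcc]
    intro s hs
    rw [Set.uIcc_of_ge (by linarith)] at hs
    exact hs.2
  have := h2.hasFDerivWithinAt_nonpos h1.hasFDerivWithinAt hy
  simp at this
  exact this

/-- The maximum principle for subsolutions of the heat equation on the sphere. -/
lemma max_principle {v v' : ℝ → E n → ℝ} (hs : ∀ t, Sm (v t))
    (hc : ContinuousOn (fun q : ℝ × E n => v q.1 q.2) (Set.univ ×ˢ sph n))
    (hd : ∀ t, ∀ x ∈ sph n, HasDerivAt (fun t => v t x) (v' t x) t)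
    (hle : ∀ t, ∀ x ∈ sph n, v' t x ≤ sL (v t) x) {M T : ℝ} (h0 : ∀ x ∈ sph n, v 0 x ≤ M)
    (hT : 0 ≤ T) (hx : x ∈ sph n) : v T x ≤ M := by
  refine le_of_forall_pos_le_add fun δ hδ => ?_
  let ε := δ / (T + 1)
  have hε : 0 < ε := div_pos hδ (by linarith)
  have hK : IsCompact (Set.Icc 0 T ×ˢ sph n) := isCompact_Icc.prod isCompact_sph
  have hcont : ContinuousOn (fun q : ℝ × E n => v q.1 q.2 - ε * q.1) (Set.Icc 0 T ×ˢ sph n) :=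
    (hc.mono (Set.prod_mono (Set.subset_univ _) le_rfl)).sub
      (continuous_const.mul continuous_fst).continuousOn
  obtain ⟨⟨t₀, x₀⟩, ⟨ht₀, hx₀⟩, hmax⟩ := hK.exists_isMaxOn ⟨(T, x), ⟨⟨hT, le_rfl⟩, hx⟩⟩ hcont
  have hmax' : ∀ t ∈ Set.Icc 0 T, ∀ y ∈ sph n, v t y - ε * t ≤ v t₀ x₀ - ε * t₀ :=
    fun t ht y hy => hmax (show (t, y) ∈ Set.Icc 0 T ×ˢ sph n from ⟨ht, hy⟩)
  have ht0 : t₀ = 0 := by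
    by_contra hne
    have hpos : 0 < t₀ := lt_of_le_of_ne ht₀.1 (Ne.symm hne)
    have h1 : 0 ≤ v' t₀ x₀ - ε := by
      refine nonneg_of_max_right (φ := fun t => v t x₀ - ε * t) ?_ hpos ht₀.2
        fun s hs => hmax' s hs x₀ hx₀
      simpa using (hd t₀ x₀ hx₀).fun_sub ((hasDerivAt_id' t₀).const_mul ε)
    have h2 := sL_nonpos_of_max (hs t₀) hx₀ fun y hy => by
      have := hmax' t₀ ht₀ y hy; linarith
    have h3 := hle t₀ x₀ hx₀
    linarith
  subst ht0
  have h1 := hmax' T ⟨hT, le_rfl⟩ x hx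
  have h2 := h0 x₀ hx₀
  have h3 : ε * T ≤ δ := by
    have : ε * (T + 1) = δ := by simp only [ε]; field_simp
    nlinarith
  linarith

variable {u : ℝ → E n → ℝ}

lemma IsHeatFlow.ge_of_ge (h : IsHeatFlow u) {M T : ℝ} (h0 : ∀ x ∈ sph n, M ≤ u 0 x) (hT : 0 ≤ T)
    (hx : x ∈ sph n) : M ≤ u T x := by
  have := max_principle (v := fun t x => (-1) * u t x) (v' := fun t x => (-1) * sL (u t) x)
    (M := -M) (T := T) (fun t => (Sm.const _).mul (h.sm t)) (continuousOn_const.mul h.cont)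
    (fun t x hx => (h.deriv t x hx).const_mul _) (fun t x hx => (sL_const_mul _ (h.sm t) hx).ge)
    (fun x hx => by have := h0 x hx; linarith) hT hx
  linarith

lemma IsHeatFlow.sG_le (h : IsHeatFlow u) {M T : ℝ} (h0 : ∀ x ∈ sph n, sG (u 0) x ≤ M) (hT : 0 ≤ T)
    (hx : x ∈ sph n) : sG (u T) x ≤ Real.exp (-(2 * (n - 2) * T)) * M := by
  have hc : ContinuousOn (fun q : ℝ × E n => sG (u q.1) q.2) (Set.univ ×ˢ sph n) :=
    continuousOn_finsetSum _ fun i _ => (h.cont_tD i).pow 2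
  have := max_principle (v := fun t x => Real.exp (2 * (n - 2) * t) * sG (u t) x)
    (v' := fun t x => Real.exp (2 * (n - 2) * t) *
      (2 * ∑ j, tD j (u t) x * tD j (sL (u t)) x + 2 * (n - 2) * sG (u t) x))
    (M := M) (T := T) (fun t => (Sm.const _).mul (h.sm t).sG)
    ((by fun_prop : Continuous fun q : ℝ × E n => Real.exp (2 * (n - 2) * q.1)).continuousOn.mul hc)
    (fun t x hx => by
      have h1 : HasDerivAt (fun t => sG (u t) x)
          (∑ j, 2 * tD j (u t) x * tD j (sL (u t)) x) t :=
        HasDerivAt.fun_sum fun i _ => by simpa using (h.deriv_tD i t x hx).fun_pow 2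
      have h2 : HasDerivAt (fun t : ℝ => Real.exp (2 * (n - 2) * t))
          (Real.exp (2 * (n - 2) * t) * (2 * (n - 2))) t := by
        simpa using ((hasDerivAt_id t).const_mul (2 * ((n : ℝ) - 2))).exp
      refine (h2.mul h1).congr_deriv ?_
      simp only [mul_assoc, ← Finset.mul_sum]
      ring)
    (fun t x hx => by
      rw [sL_const_mul _ (h.sm t).sG hx]
      exact mul_le_mul_of_nonneg_left (bochner_le (h.sm t) hx) (Real.exp_pos _).le)
    (fun x hx => by simpa using h0 x hx) hT hx
  rw [Real.exp_neg, inv_mul_eq_div, le_div_iff₀ (Real.exp_pos _), mul_comm]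
  exact this

end maximum

section oscillation
variable {w : E n → ℝ}

lemma exists_great_circle (hn : 2 ≤ n) {x y : E n} (hx : x ∈ sph n) (hy : y ∈ sph n) :
    ∃ v : E n, ‖v‖ = 1 ∧ ⟪x, v⟫ = 0 ∧ ∃ θ ∈ Set.Icc 0 Real.pi, y = Real.cos θ • x + Real.sin θ • v := by
  have hx1 : ‖x‖ = 1 := by simpa using hx
  have hy1 : ‖y‖ = 1 := by simpa using hy
  have habs := abs_real_inner_le_norm x y
  rw [hx1, hy1, mul_one, abs_le] at habs
  set c := ⟪x, y⟫ with hc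
  have hnorm : ‖y - c • x‖ ^ 2 = 1 - c ^ 2 := by
    rw [norm_sub_sq_real, inner_smul_right, real_inner_comm, ← hc, norm_smul, hx1, hy1,
      Real.norm_eq_abs, mul_one, sq_abs]
    ring
  have hcos := Real.cos_arccos habs.1 habs.2
  have hsin : Real.sin (Real.arccos c) = ‖y - c • x‖ := by
    rw [Real.sin_arccos, ← hnorm, Real.sqrt_sq (norm_nonneg _)]
  have hθ : Real.arccos c ∈ Set.Icc 0 Real.pi := ⟨Real.arccos_nonneg _, Real.arccos_le_pi _⟩
  by_cases h0 : y - c • x = 0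
  · have : ∃ v : E n, v ∈ (Submodule.span ℝ {x})ᗮ ∧ v ≠ 0 := by
      apply Submodule.exists_mem_ne_zero_of_ne_bot
      rw [Ne, Submodule.orthogonal_eq_bot_iff]
      intro htop
      have h1 := finrank_span_le_card (R := ℝ) ({x} : Set (E n))
      rw [htop, finrank_top, finrank_euclideanSpace_fin, Set.toFinset_singleton,
        Finset.card_singleton] at h1
      omega
    obtain ⟨v, hv, hv0⟩ := this
    refine ⟨‖v‖⁻¹ • v, norm_smul_inv_norm hv0, ?_, _, hθ, ?_⟩
    · rw [inner_smul_right, Submodule.mem_orthogonal_singleton_iff_inner_right.1 hv, mul_zero]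
    · rw [hsin, hcos, h0, norm_zero, zero_smul, add_zero]
      exact sub_eq_zero.1 h0
  · refine ⟨‖y - c • x‖⁻¹ • (y - c • x), norm_smul_inv_norm h0, ?_, _, hθ, ?_⟩
    · rw [inner_smul_right, inner_sub_right, inner_smul_right, ← hc, real_inner_self_eq_norm_sq, hx1]
      ring
    · rw [hsin, hcos, smul_inv_smul₀ (norm_ne_zero_iff.2 h0)]
      abel

lemma fderiv_sq_le {x v : E n} (hv : ⟪x, v⟫ = 0) (w : E n → ℝ) :
    fderiv ℝ w x v ^ 2 ≤ ‖v‖ ^ 2 * sG w x := by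
  have h1 : v = ∑ i, v i • tvec i x := by
    ext k
    have h2 : ∑ i, v i * x i = 0 := by
      rw [← hv]; simp [PiLp.inner_apply]
    simp only [WithLp.ofLp_sum, Finset.sum_apply, PiLp.smul_apply, tvec_apply, smul_eq_mul, mul_sub,
      Finset.sum_sub_distrib, ← mul_assoc, ← Finset.sum_mul, h2]
    simp
  have h2 : fderiv ℝ w x v = ∑ i, v i * tD i w x := by
    conv_lhs => rw [h1]
    simp [tD]
  rw [h2, EuclideanSpace.real_norm_sq_eq]
  exact Finset.sum_mul_sq_le_sq_mul_sq _ _ _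

lemma sub_le_of_sG_le (hn : 2 ≤ n) (h : C1 w) {K : ℝ} (hK : 0 ≤ K)
    (hG : ∀ x ∈ sph n, sG w x ≤ K ^ 2) {x y : E n} (hx : x ∈ sph n) (hy : y ∈ sph n) :
    w y - w x ≤ K * Real.pi := by
  obtain ⟨v, hv, hxv, θ, hθ, rfl⟩ := exists_great_circle hn hx hy
  have hx1 : ‖x‖ = 1 := by simpa using hx
  let γ : ℝ → E n := fun s => Real.cos s • x + Real.sin s • v
  let γ' : ℝ → E n := fun s => -Real.sin s • x + Real.cos s • v
  have hγ : ∀ s, HasDerivAt γ (γ' s) s := fun s =>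
    ((Real.hasDerivAt_cos s).smul_const x).add ((Real.hasDerivAt_sin s).smul_const v)
  have hvx : ⟪v, x⟫ = 0 := by rw [real_inner_comm]; exact hxv
  have hin : ∀ s, ‖γ s‖ ^ 2 = 1 ∧ ‖γ' s‖ ^ 2 = 1 ∧ ⟪γ s, γ' s⟫ = 0 := by
    intro s
    have hsc := Real.sin_sq_add_cos_sq s
    simp only [← real_inner_self_eq_norm_sq, γ, γ', inner_add_left, inner_add_right, inner_smul_left,
      inner_smul_right, hxv, hvx, conj_trivial]
    simp only [real_inner_self_eq_norm_sq, hx1, hv]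
    refine ⟨?_, ?_, ?_⟩ <;> linarith
  have hmem : ∀ s, γ s ∈ sph n := fun s => by
    have := (pow_eq_one_iff_of_nonneg (norm_nonneg _) two_ne_zero).1 (hin s).1
    simpa [sph] using this
  have hd : ∀ s, HasDerivAt (fun s => w (γ s)) (fderiv ℝ w (γ s) (γ' s)) s := fun s =>
    (h.diff (hmem s)).hasFDerivAt.comp_hasDerivAt s (hγ s)
  have hb : ∀ s, ‖fderiv ℝ w (γ s) (γ' s)‖ ≤ K := by
    intro s
    rw [Real.norm_eq_abs]
    apply abs_le_of_sq_le_sq _ hK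
    have h1 := fderiv_sq_le (hin s).2.2 w
    rw [(hin s).2.1, one_mul] at h1
    exact h1.trans (hG _ (hmem s))
  have := (convex_univ (𝕜 := ℝ)).norm_image_sub_le_of_norm_hasDerivWithin_le (x := 0) (y := θ)
    (fun s _ => (hd s).hasDerivWithinAt) (fun s _ => hb s) trivial trivial
  simp only [γ, Real.cos_zero, Real.sin_zero, one_smul, zero_smul, add_zero, sub_zero,
    Real.norm_eq_abs, abs_of_nonneg hθ.1] at this
  exact (le_abs_self _).trans (this.trans (mul_le_mul_of_nonneg_left hθ.2 hK))

end oscillation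

section entropy

lemma hasDerivAt_integral_sph [NeZero n] {F F' : ℝ → E n → ℝ} {I : Set ℝ} (hI : IsOpen I)
    (hF : ∀ t ∈ I, ContinuousOn (F t) (sph n))
    (hd : ∀ t ∈ I, ∀ x ∈ sph n, HasDerivAt (fun t => F t x) (F' t x) t)
    (hF' : ContinuousOn (fun q : ℝ × E n => F' q.1 q.2) (I ×ˢ sph n)) {t : ℝ} (ht : t ∈ I) :
    HasDerivAt (fun t => ∫ x, F t x ∂sphMeasure n) (∫ x, F' t x ∂sphMeasure n) t := by
  obtain ⟨ε, hε, hsub⟩ := nhds_basis_closedBall.mem_iff.1 (hI.mem_nhds ht)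
  obtain ⟨C, hC⟩ := ((isCompact_closedBall t ε).prod isCompact_sph).exists_bound_of_continuousOn
    (hF'.mono (Set.prod_mono hsub le_rfl))
  have hFt : ContinuousOn (F' t) (sph n) :=
    hF'.comp (f := fun x : E n => (t, x)) (by fun_prop) fun x hx => ⟨ht, hx⟩
  exact (hasDerivAt_integral_of_dominated_loc_of_deriv_le (bound := fun _ => C)
    (closedBall_mem_nhds t hε)
    (Filter.eventually_of_mem (hI.mem_nhds ht) fun s hs =>
      (integrable_sph (hF s hs)).aestronglyMeasurable)
    (integrable_sph (hF t ht)) (integrable_sph hFt).aestronglyMeasurable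
    (ae_mem_sph.mono fun x hx s hs => hC (s, x) ⟨hs, hx⟩) (integrable_const C)
    (ae_mem_sph.mono fun x hx s hs => hd s (hsub hs) x hx)).2

variable {u : ℝ → E n → ℝ}

lemma isOpen_pos (hc : ContinuousOn (fun q : ℝ × E n => u q.1 q.2) (Set.univ ×ˢ sph n)) :
    IsOpen {t | ∀ x ∈ sph n, 0 < u t x} := by
  have hf : Continuous fun q : ℝ × sph n => u q.1 q.2 :=
    hc.comp_continuous (f := fun q : ℝ × sph n => (q.1, (q.2 : E n))) (by fun_prop)
      fun q => ⟨trivial, q.2.2⟩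
  have : CompactSpace (sph n) := isCompact_iff_compactSpace.1 isCompact_sph
  have h1 : IsClosed (Prod.fst '' {q : ℝ × sph n | u q.1 q.2 ≤ 0}) :=
    isClosedMap_fst_of_compactSpace _ (isClosed_le hf continuous_const)
  convert h1.isOpen_compl using 1
  ext t
  simp

lemma Sm.sqrt {w : E n → ℝ} (h : Sm w) (h0 : ∀ x ∈ sph n, 0 < w x) : Sm fun x => √(w x) :=
  fun x hx => (h x hx).sqrt (h0 x hx).ne'

lemma Sm.log {w : E n → ℝ} (h : Sm w) (h0 : ∀ x ∈ sph n, 0 < w x) : Sm fun x => Real.log (w x) :=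
  fun x hx => (h x hx).log (h0 x hx).ne'

lemma tD_sqrt {w : E n → ℝ} {x : E n} (h : DifferentiableAt ℝ w x) (h0 : 0 < w x) (i : Fin n) :
    tD i (fun x => √(w x)) x = tD i w x / (2 * √(w x)) := by
  rw [tD_comp (Real.hasDerivAt_sqrt h0.ne') h]; ring

lemma sL_of_sqrt {w : E n → ℝ} (h : Sm w) (h0 : ∀ x ∈ sph n, 0 < w x) {x : E n} (hx : x ∈ sph n) :
    sL w x = 2 * √(w x) * sL (fun x => √(w x)) x + 2 * sG (fun x => √(w x)) x := by
  have hg := h.sqrt h0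
  have h1 := sL_mul hg hg hx
  have h2 : sL w x = sL (fun y => √(w y) * √(w y)) x := by
    refine Finset.sum_congr rfl fun i _ => ?_
    have he : w =ᶠ[𝓝 x] fun y => √(w y) * √(w y) := by
      filter_upwards [(h.diff hx).continuousAt.eventually (lt_mem_nhds (h0 x hx))] with y hy
      exact (Real.mul_self_sqrt hy.le).symm
    exact tD_congr (tD_congr_eventually he)
  rw [h2, h1]
  have : ∑ i, tD i (fun x => √(w x)) x * tD i (fun x => √(w x)) x = sG (fun x => √(w x)) x :=
    Finset.sum_congr rfl fun i _ => by ring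
  rw [this]; ring

lemma hasDerivAt_integral_mul_log [NeZero n] (h : IsHeatFlow u) {t : ℝ}
    (ht : ∀ x ∈ sph n, 0 < u t x) :
    HasDerivAt (fun t => ∫ x, u t x * Real.log (u t x) ∂sphMeasure n)
      (- (4 * ∫ x, sG (fun x => √(u t x)) x ∂sphMeasure n)) t := by
  have hI := isOpen_pos h.cont
  set I := {t | ∀ x ∈ sph n, 0 < u t x} with hIdef
  have hcu : ContinuousOn (fun q : ℝ × E n => u q.1 q.2) (I ×ˢ sph n) :=
    h.cont.mono (Set.prod_mono (Set.subset_univ _) le_rfl)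
  have hcL : ContinuousOn (fun q : ℝ × E n => sL (u q.1) q.2) (I ×ˢ sph n) :=
    h.cont_sL.mono (Set.prod_mono (Set.subset_univ _) le_rfl)
  have key := hasDerivAt_integral_sph (F := fun t x => u t x * Real.log (u t x))
    (F' := fun t x => sL (u t) x * Real.log (u t x) + sL (u t) x) hI
    (fun s hs => ((h.sm s).mul ((h.sm s).log hs)).continuousOn)
    (fun s hs x hx => by
      have h0 := (hs x hx).ne'
      refine ((h.deriv s x hx).mul ((h.deriv s x hx).log h0)).congr_deriv ?_
      field_simp)
    ((hcL.mul (hcu.log fun q hq => (hq.1 q.2 hq.2).ne')).add hcL) ht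
  refine key.congr_deriv ?_
  have hs := h.sm t
  have hl := hs.log ht
  have h1 := integral_mul_sL (hl.add (Sm.const 1)) hs
  rw [integral_congr_sph (w' := fun x => (Real.log (u t x) + 1) * sL (u t) x) fun x _ => by ring,
    h1, ← integral_const_mul]
  refine congrArg Neg.neg (integral_congr_sph fun x hx => ?_)
  have hpos := ht x hx
  have hsq := Real.sq_sqrt hpos.le
  have hne := (Real.sqrt_pos.2 hpos).ne'
  unfold sG
  rw [Finset.mul_sum]
  refine Finset.sum_congr rfl fun i _ => ?_
  have h0 : tD i (fun _ : E n => (1 : ℝ)) x = 0 := by simp [tD]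
  rw [tD_add (hl.diff hx) ((Sm.const 1).diff hx), h0,
    tD_comp (Real.hasDerivAt_log hpos.ne') (hs.diff hx), tD_sqrt (hs.diff hx) hpos, div_pow, mul_pow,
    hsq]
  field_simp
  ring

lemma hasDerivAt_integral_sG_sqrt [NeZero n] (h : IsHeatFlow u) {t : ℝ}
    (ht : ∀ x ∈ sph n, 0 < u t x) :
    HasDerivAt (fun t => ∫ x, sG (fun x => √(u t x)) x ∂sphMeasure n)
      (- (2 * (∫ x, sL (fun x => √(u t x)) x ^ 2 ∂sphMeasure n +
        ∫ x, sG (fun x => √(u t x)) x * sL (fun x => √(u t x)) x / √(u t x) ∂sphMeasure n))) t := by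
  have hI := isOpen_pos h.cont
  set I := {t | ∀ x ∈ sph n, 0 < u t x} with hIdef
  have hmono : I ×ˢ sph n ⊆ Set.univ ×ˢ sph n := Set.prod_mono (Set.subset_univ _) le_rfl
  have hcu := h.cont.mono hmono
  have hcL := h.cont_sL.mono hmono
  have hsq : ∀ q ∈ I ×ˢ sph n, √(u q.1 q.2) ≠ 0 := fun q hq =>
    (Real.sqrt_pos.2 (hq.1 q.2 hq.2)).ne'
  have key := hasDerivAt_integral_sph (F := fun t x => sG (fun x => √(u t x)) x)
    (F' := fun t x => ∑ i, 2 * (tD i (u t) x / (2 * √(u t x))) *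
      (tD i (sL (u t)) x / (2 * √(u t x)) - tD i (u t) x * sL (u t) x / (4 * (u t x * √(u t x))))) hI
    (fun s hs => ((h.sm s).sqrt hs).sG.continuousOn)
    (fun s hs x hx => by
      have he : (fun t => ∑ i, (tD i (u t) x / (2 * √(u t x))) ^ 2) =ᶠ[𝓝 s]
          fun t => sG (fun x => √(u t x)) x := by
        filter_upwards [hI.mem_nhds hs] with r hr
        exact Finset.sum_congr rfl fun i _ => by rw [tD_sqrt ((h.sm r).diff hx) (hr x hx)]
      refine HasDerivAt.congr_of_eventuallyEq (HasDerivAt.fun_sum fun i _ => ?_) he.symm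
      have hp := hs x hx
      have hne := (Real.sqrt_pos.2 hp).ne'
      have h1 := (h.deriv_tD i s x hx).fun_div (((h.deriv s x hx).sqrt hp.ne').const_mul 2)
        (mul_ne_zero two_ne_zero hne)
      refine (h1.fun_pow 2).congr_deriv ?_
      have e := Real.sq_sqrt hp.le
      have e2 : u s x * √(u s x) = √(u s x) ^ 3 := by rw [pow_succ, e]
      rw [e2]
      generalize √(u s x) = g at hne ⊢
      simp only [Nat.cast_ofNat, Nat.add_one_sub_one, pow_one]
      field_simp
      ring)
    (by
      refine continuousOn_finsetSum _ fun i _ => ?_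
      have c1 := (h.cont_tD i).mono hmono
      have c2 := (h.cont_tD_sL i).mono hmono
      have c3 := hcu.sqrt
      exact (continuousOn_const.mul (c1.div (continuousOn_const.mul c3)
        fun q hq => mul_ne_zero two_ne_zero (hsq q hq))).mul
        ((c2.div (continuousOn_const.mul c3) fun q hq => mul_ne_zero two_ne_zero (hsq q hq)).sub
          ((c1.mul hcL).div (continuousOn_const.mul (hcu.mul c3)) fun q hq =>
            mul_ne_zero four_ne_zero (mul_ne_zero (hq.1 q.2 hq.2).ne' (hsq q hq)))))
    ht
  refine key.congr_deriv ?_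
  have hs := h.sm t
  have hg := hs.sqrt ht
  have hg0 : ∀ x ∈ sph n, √(u t x) ≠ 0 := fun x hx => (Real.sqrt_pos.2 (ht x hx)).ne'
  have hh : Sm (fun x => sL (u t) x / (2 * √(u t x))) :=
    hs.sL.div ((Sm.const 2).mul hg) fun x hx => mul_ne_zero two_ne_zero (hg0 x hx)
  have h1 := integral_mul_sL hh hg
  have i1 := integrable_sph (hg.sL.pow 2).continuousOn
  have i2 := integrable_sph ((hg.sG.mul hg.sL).div hg hg0).continuousOn
  have hAB : ∫ x, (sL (fun x => √(u t x)) x ^ 2 +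
      sG (fun x => √(u t x)) x * sL (fun x => √(u t x)) x / √(u t x)) ∂sphMeasure n =
      ∫ x, sL (u t) x / (2 * √(u t x)) * sL (fun x => √(u t x)) x ∂sphMeasure n := by
    refine integral_congr_sph fun x hx => ?_
    have hne := hg0 x hx
    simp only [sL_of_sqrt hs ht hx]
    field_simp
  rw [← integral_add i1 i2, hAB, h1, mul_neg, neg_neg, ← integral_const_mul]
  · refine integral_congr_sph fun x hx => ?_
    rw [Finset.mul_sum]
    refine Finset.sum_congr rfl fun i _ => ?_
    have hp := ht x hx
    have e := Real.sq_sqrt hp.le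
    have e3 : u t x * √(u t x) = √(u t x) ^ 3 := by rw [pow_succ, e]
    have hne := hg0 x hx
    have hi : tD i (fun y => (√(u t y))⁻¹) x = - (√(u t x) ^ 2)⁻¹ * tD i (fun x => √(u t x)) x :=
      tD_comp (φ := fun s => s⁻¹) (hasDerivAt_inv hne) (hg.diff hx)
    have e2 : (fun x => sL (u t) x / (2 * √(u t x))) = fun x => sL (u t) x * ((1 / 2) * (√(u t x))⁻¹) := by
      funext y; rw [div_eq_mul_inv, mul_inv]; ring
    rw [e2, tD_mul (hs.sL.diff hx) (((hg.diff hx).fun_inv hne).const_mul _),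
      tD_const_mul _ ((hg.diff hx).fun_inv hne), hi, tD_sqrt (hs.diff hx) hp, e3]
    field_simp
    ring

lemma integral_heatFlow [NeZero n] (h : IsHeatFlow u) (t : ℝ) :
    ∫ x, u t x ∂sphMeasure n = ∫ x, u 0 x ∂sphMeasure n := by
  have hd : ∀ t, HasDerivAt (fun t => ∫ x, u t x ∂sphMeasure n) 0 t := by
    intro t
    refine (hasDerivAt_integral_sph isOpen_univ (fun s _ => (h.sm s).continuousOn)
      (fun s _ => h.deriv s) h.cont_sL (Set.mem_univ t)).congr_deriv ?_
    have := integral_mul_sL (Sm.const 1) (h.sm t)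
    have h0 : ∀ i (x : E n), tD i (fun _ : E n => (1 : ℝ)) x = 0 := fun i x => by simp [tD]
    simpa [h0] using this
  exact is_const_of_deriv_eq_zero (fun t => (hd t).differentiableAt) (fun t => (hd t).deriv) t 0

/-- The logarithmic Sobolev inequality on the sphere for positive polynomials. -/
lemma log_sobolev_poly (hn : 3 ≤ n) {k : ℕ} {p : E n → ℝ} (hp : p ∈ poly n k)
    (hpos : ∀ x ∈ sph n, 0 < p x) :
    ∫ x, p x * Real.log (p x) ∂sphMeasure n
      - (∫ x, p x ∂sphMeasure n) * Real.log (∫ x, p x ∂sphMeasure n) ≤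
      1 / (2 * (n - 1)) * ∫ x, sG p x / p x ∂sphMeasure n := by
  have : NeZero n := ⟨by omega⟩
  have hn' : (3 : ℝ) ≤ n := by exact_mod_cast hn
  obtain ⟨u, hu, rfl⟩ := exists_heatFlow hp
  have hne : (sph n).Nonempty :=
    ⟨EuclideanSpace.single ⟨0, by omega⟩ 1, by simp [sph]⟩
  obtain ⟨x₀, hx₀, hmin⟩ := isCompact_sph.exists_isMinOn hne (hu.sm 0).continuousOn
  have hpos' : ∀ t, 0 ≤ t → ∀ x ∈ sph n, 0 < u t x := fun t ht x hx =>
    (hpos x₀ hx₀).trans_le (hu.ge_of_ge (fun y hy => hmin hy) ht hx)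
  set m := ∫ x, u 0 x ∂sphMeasure n with hm
  have hm0 : 0 < m := by
    have h1 := integral_mono_sph (w := fun _ => u 0 x₀) continuousOn_const (hu.sm 0).continuousOn
      fun y hy => hmin hy
    rw [integral_const, probReal_univ, one_smul] at h1
    exact (hpos x₀ hx₀).trans_le h1
  let P : ℝ → ℝ := fun t => ∫ x, u t x * Real.log (u t x) ∂sphMeasure n
  let G : ℝ → ℝ := fun t => ∫ x, sG (fun x => √(u t x)) x ∂sphMeasure n
  have hG0 : ∀ t, 0 ≤ G t := fun t => integral_nonneg fun x => Finset.sum_nonneg fun i _ => sq_nonneg _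
  have hmono : MonotoneOn (fun t => P t - 2 / (n - 1) * G t) (Set.Ici 0) := by
    have hd : ∀ t ∈ Set.Ici (0 : ℝ), HasDerivAt (fun t => P t - 2 / (n - 1) * G t) _ t :=
      fun t ht => (hasDerivAt_integral_mul_log hu (hpos' t ht)).fun_sub
        ((hasDerivAt_integral_sG_sqrt hu (hpos' t ht)).const_mul _)
    refine monotoneOn_of_deriv_nonneg (convex_Ici 0)
      (fun t ht => (hd t ht).continuousAt.continuousWithinAt)
      (fun t ht => (hd t (interior_subset ht)).differentiableAt.differentiableWithinAt)
      fun t ht => ?_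
    rw [(hd t (interior_subset ht)).deriv]
    have hp' := hpos' t (interior_subset ht)
    have hk := integral_key hn ((hu.sm t).sqrt hp') fun x hx => Real.sqrt_pos.2 (hp' x hx)
    have : 4 * ∫ x, sG (fun x => √(u t x)) x ∂sphMeasure n =
      2 / (n - 1) * (2 * ((n - 1) * ∫ x, sG (fun x => √(u t x)) x ∂sphMeasure n)) := by
      have : (n : ℝ) - 1 ≠ 0 := by linarith
      field_simp; ring
    rw [this, ← mul_neg, ← mul_sub]
    refine mul_nonneg (div_nonneg (by norm_num) (by linarith)) ?_
    linarith
  obtain ⟨M, hM⟩ : ∃ M : ℝ, ∀ x ∈ sph n, sG (u 0) x ≤ M ^ 2 ∧ 0 ≤ M := by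
    obtain ⟨C, hC⟩ := isCompact_sph.exists_bound_of_continuousOn (hu.sm 0).sG.continuousOn
    refine ⟨√|C|, fun x hx => ⟨?_, Real.sqrt_nonneg _⟩⟩
    rw [Real.sq_sqrt (abs_nonneg _)]
    exact (le_abs_self _).trans ((hC x hx).trans (le_abs_self _))
  have hM0 : 0 ≤ M := (hM x₀ hx₀).2
  let K : ℝ → ℝ := fun T => Real.exp (-((n - 2) * T)) * M
  have hbound : ∀ T, 0 ≤ T → P T ≤ m * Real.log (m + K T * Real.pi) := by
    intro T hT
    have hK : 0 ≤ K T := mul_nonneg (Real.exp_pos _).le hM0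
    have hosc : ∀ x ∈ sph n, u T x ≤ m + K T * Real.pi := by
      intro x hx
      have h1 : ∀ y ∈ sph n, u T x - K T * Real.pi ≤ u T y := by
        intro y hy
        have := sub_le_of_sG_le (by omega) (hu.sm T).C1 hK (fun z hz => ?_) hy hx
        · linarith
        · refine (hu.sG_le (fun y hy => (hM y hy).1) hT hz).trans (le_of_eq ?_)
          simp only [K]
          rw [mul_pow, ← Real.exp_nat_mul]
          congr 2; push_cast; ring
      have h2 := integral_mono_sph continuousOn_const (hu.sm T).continuousOn h1
      rw [integral_const, probReal_univ, one_smul, integral_heatFlow hu T] at h2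
      linarith
    have h3 := integral_mono_sph (w := fun x => u T x * Real.log (u T x))
      (w' := fun x => u T x * Real.log (m + K T * Real.pi))
      ((hu.sm T).mul ((hu.sm T).log (hpos' T hT))).continuousOn
      ((hu.sm T).mul (Sm.const _)).continuousOn fun x hx =>
        mul_le_mul_of_nonneg_left (Real.log_le_log (hpos' T hT x hx) (hosc x hx)) (hpos' T hT x hx).le
    rwa [integral_mul_const, integral_heatFlow hu T] at h3
  have hlim : Tendsto (fun T => m * Real.log (m + K T * Real.pi)) atTop (𝓝 (m * Real.log m)) := by
    have hK : Tendsto K atTop (𝓝 0) := by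
      have h1 : Tendsto (fun T : ℝ => (n - 2) * T) atTop atTop :=
        tendsto_id.const_mul_atTop (by linarith)
      have := (Real.tendsto_exp_neg_atTop_nhds_zero.comp h1).mul_const M
      rwa [zero_mul] at this
    have h2 : Tendsto (fun T => m + K T * Real.pi) atTop (𝓝 m) := by
      simpa using (hK.mul_const Real.pi).const_add m
    exact (h2.log hm0.ne').const_mul m
  have hfin : P 0 - 2 / (n - 1) * G 0 ≤ m * Real.log m := by
    refine ge_of_tendsto hlim (eventually_atTop.2 ⟨0, fun T hT => ?_⟩)
    have h1 := hmono (Set.mem_Ici.2 le_rfl) (Set.mem_Ici.2 hT) hT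
    have h2 := hbound T hT
    have h3 : 0 ≤ 2 / ((n : ℝ) - 1) * G T := mul_nonneg (div_nonneg (by norm_num) (by linarith)) (hG0 T)
    simp only at h1
    linarith
  have hG : G 0 = 1 / 4 * ∫ x, sG (u 0) x / u 0 x ∂sphMeasure n := by
    rw [← integral_const_mul]
    refine integral_congr_sph fun x hx => ?_
    rw [sG, sG, Finset.sum_div, Finset.mul_sum]
    refine Finset.sum_congr rfl fun i _ => ?_
    rw [tD_sqrt ((hu.sm 0).diff hx) (hpos x hx), div_pow, mul_pow, Real.sq_sqrt (hpos x hx).le]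
    ring
  have h2 : 2 / ((n : ℝ) - 1) * G 0 = 1 / (2 * (n - 1)) * ∫ x, sG (u 0) x / u 0 x ∂sphMeasure n := by
    rw [hG]
    have : (n : ℝ) - 1 ≠ 0 := by linarith
    field_simp
    norm_num
  rw [h2] at hfin
  simp only [P] at hfin
  linarith

end entropy

section approximation

/-- Spherical convolution with the zonal polynomial `(1 + ⟪x, y⟫) ^ k`. -/
def zonal (k : ℕ) (w : E n → ℝ) (x : E n) : ℝ := ∫ y, (1 + ⟪x, y⟫) ^ k * w y ∂sphMeasure n

variable {w : E n → ℝ} {x : E n}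

lemma continuousOn_zonal_integrand (k : ℕ) (hw : ContinuousOn w (sph n)) (x : E n) :
    ContinuousOn (fun y => (1 + ⟪x, y⟫) ^ k * w y) (sph n) :=
  ContinuousOn.mul (by fun_prop) hw

lemma zonal_mem_poly [NeZero n] (k : ℕ) (hw : ContinuousOn w (sph n)) : zonal k w ∈ poly n k := by
  induction k generalizing w with
  | zero =>
    refine Submodule.mem_span_singleton.2 ⟨∫ y, w y ∂sphMeasure n, funext fun x => ?_⟩
    simp [zonal]
  | succ k ih =>
    have hi : ∀ i : Fin n, ContinuousOn (fun y => y i * w y) (sph n) := fun i =>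
      (contDiff_coord i).continuous.continuousOn.mul hw
    have : zonal (k + 1) w = zonal k w + ∑ i, fun x : E n => x i * zonal k (fun y => y i * w y) x := by
      funext x
      simp only [Pi.add_apply, Finset.sum_apply, zonal]
      simp_rw [← integral_const_mul]
      rw [← integral_finsetSum _ fun i _ =>
        (integrable_sph (continuousOn_zonal_integrand k (hi i) x)).const_mul _, ← integral_add
        (integrable_sph (continuousOn_zonal_integrand k hw x)) (integrable_finsetSum _ fun i _ =>
        (integrable_sph (continuousOn_zonal_integrand k (hi i) x)).const_mul _)]
      refine integral_congr_sph fun y _ => ?_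
      have e : ⟪x, y⟫ = ∑ i, x i * y i := by
        simp [PiLp.inner_apply, mul_comm]
      have : ∑ i, x i * ((1 + ⟪x, y⟫) ^ k * (y i * w y)) = ⟪x, y⟫ * ((1 + ⟪x, y⟫) ^ k * w y) := by
        rw [e, Finset.sum_mul]
        exact Finset.sum_congr rfl fun i _ => by ring
      rw [this]; ring
    rw [this]
    exact Submodule.add_mem _ (poly_le_succ k (ih hw))
      (Submodule.sum_mem _ fun i _ => coord_mul_mem_poly (ih (hi i)) i)

lemma rX_zonal [NeZero n] (k : ℕ) (hw : C1 w) (i j : Fin n) (x : E n) :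
    rX i j (zonal k w) x = zonal k (rX i j w) x := by
  rcases eq_or_ne i j with rfl | hij
  · simp [rX, rvec, zonal]
  have hd := hasDerivAt_comp_rotFun hij (w := zonal k w) (s := 0) (x := x)
    ((contDiff_of_mem_poly (zonal_mem_poly k hw.continuousOn)).contDiffAt.differentiableAt (by simp))
  have e : ∀ s, zonal k w (rotFun i j s x) =
      ∫ y, (1 + ⟪x, y⟫) ^ k * w (rotFun i j s y) ∂sphMeasure n := by
    intro s
    rw [zonal, ← integral_comp_isometry (rot hij s)]
    refine integral_congr_sph fun y _ => ?_
    rw [← rot_apply hij, LinearIsometryEquiv.inner_map_map, rot_apply]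
  have hd' := hasDerivAt_integral_sph (n := n) (I := Set.univ) (t := 0)
    (F := fun s y => (1 + ⟪x, y⟫) ^ k * w (rotFun i j s y))
    (F' := fun s y => (1 + ⟪x, y⟫) ^ k * rX i j w (rotFun i j s y)) isOpen_univ
    (fun s _ => continuousOn_zonal_integrand k
      (hw.continuousOn.comp (rot hij s).continuous.continuousOn fun y hy => rotFun_mem hij s hy) x)
    (fun s _ y hy => (hasDerivAt_comp_rotFun hij (hw.diff (rotFun_mem hij s hy))).const_mul _)
    (ContinuousOn.mul (by fun_prop) ((hw.continuousOn_rX i j).comp (f := fun q : ℝ × E n =>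
      rotFun i j q.1 q.2) (by unfold rotFun rvec; fun_prop) fun q hq => rotFun_mem hij q.1 hq.2))
    (Set.mem_univ _)
  simp_rw [e] at hd
  have := hd.unique hd'
  simp only [rotFun_zero] at this
  exact this

lemma inner_le_of_sph {y : E n} (hx : x ∈ sph n) (hy : y ∈ sph n) : -1 ≤ ⟪x, y⟫ := by
  have h1 : ‖x‖ = 1 := by simpa [sph] using hx
  have h2 : ‖y‖ = 1 := by simpa [sph] using hy
  have := (abs_le.1 (abs_real_inner_le_norm x y)).1
  rwa [h1, h2, one_mul] at this

lemma one_le_zonal_one [NeZero n] (k : ℕ) (hx : x ∈ sph n) : 1 ≤ zonal k (fun _ => 1) x := by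
  have h0 : ∫ y, ⟪x, y⟫ ∂sphMeasure n = 0 := by
    have := integral_comp_isometry (LinearIsometryEquiv.neg ℝ (E := E n)) fun y => ⟪x, y⟫
    simp only [LinearIsometryEquiv.coe_neg, inner_neg_right, integral_neg] at this
    linarith
  have h1 := integral_mono_sph (n := n) (w := fun y => 1 + k * ⟪x, y⟫)
    (w' := fun y => (1 + ⟪x, y⟫) ^ k * 1) (by fun_prop) (by fun_prop) fun y hy => by
      rw [mul_one]
      exact one_add_mul_le_pow (by linarith [inner_le_of_sph hx hy]) k
  rwa [integral_add (integrable_const _) (integrable_sph (by fun_prop)), integral_const_mul, h0,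
    mul_zero, add_zero, integral_const, probReal_univ, one_smul] at h1

lemma zonal_one_eq (k : ℕ) {e : E n} (he : e ∈ sph n) (hx : x ∈ sph n) :
    zonal k (fun _ => 1) e = zonal k (fun _ => 1) x := by
  have h1 : ‖x‖ = 1 := by simpa [sph] using hx
  have h2 : ‖e‖ = 1 := by simpa [sph] using he
  obtain ⟨L, rfl⟩ : ∃ L : E n ≃ₗᵢ[ℝ] E n, L e = x :=
    ⟨_, Submodule.reflection_sub (h2.trans h1.symm)⟩
  rw [zonal, zonal, ← integral_comp_isometry L fun y => (1 + ⟪L e, y⟫) ^ k * 1]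
  simp only [LinearIsometryEquiv.inner_map_map]

/-- The normalized spherical convolution with `(1 + ⟪x, y⟫) ^ k`. -/
def zonalMean (k : ℕ) (w : E n → ℝ) (x : E n) : ℝ := (zonal k (fun _ => 1) x)⁻¹ * zonal k w x

lemma tendsto_zonalMean [NeZero n] (hw : ContinuousOn w (sph n)) (hx : x ∈ sph n) :
    Tendsto (fun k => zonalMean k w x) atTop (𝓝 (w x)) := by
  have h1 : ‖x‖ = 1 := by simpa [sph] using hx
  have key := tendsto_setIntegral_pow_smul_of_unique_maximum_of_isCompact_of_measure_nhdsWithin_pos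
    (μ := sphMeasure n) (c := fun y => 1 + ⟪x, y⟫) (g := w) (x₀ := x) isCompact_sph
    (fun u hu hxu => by
      rw [← Measure.restrict_apply hu.measurableSet, restrict_sph]
      exact sphMeasure_pos hu ⟨x, hxu, hx⟩)
    (by fun_prop)
    (fun y hy hne => by
      have h2 : ‖y‖ = 1 := by simpa [sph] using hy
      rw [real_inner_self_eq_norm_sq, h1]
      have := (inner_lt_one_iff_real_of_norm_eq_one h1 h2).2 hne.symm
      linarith)
    (fun y hy => by linarith [inner_le_of_sph hx hy])
    (by rw [real_inner_self_eq_norm_sq, h1]; norm_num) hx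
    (by rw [IntegrableOn, restrict_sph]; exact integrable_sph hw) (hw x hx)
  rw [restrict_sph] at key
  refine key.congr fun k => ?_
  simp [zonalMean, zonal]

lemma zonalMean_le [NeZero n] (k : ℕ) (hw : ContinuousOn w (sph n)) {M : ℝ}
    (hM : ∀ y ∈ sph n, w y ≤ M) (hx : x ∈ sph n) : zonalMean k w x ≤ M := by
  have h1 := one_le_zonal_one k hx
  have h2 : zonal k w x ≤ zonal k (fun _ => 1) x * M := by
    rw [zonal, zonal, ← integral_mul_const]
    refine integral_mono_sph (continuousOn_zonal_integrand k hw x) (by fun_prop) fun y hy => ?_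
    rw [mul_one]
    exact mul_le_mul_of_nonneg_left (hM y hy) (pow_nonneg (by linarith [inner_le_of_sph hx hy]) k)
  rw [zonalMean, inv_mul_le_iff₀ (by linarith)]
  exact h2

lemma le_zonalMean [NeZero n] (k : ℕ) (hw : ContinuousOn w (sph n)) {m : ℝ}
    (hm : ∀ y ∈ sph n, m ≤ w y) (hx : x ∈ sph n) : m ≤ zonalMean k w x := by
  have h := zonalMean_le (w := fun y => - w y) k hw.neg (M := -m) (fun y hy => neg_le_neg (hm y hy)) hx
  have : zonalMean k (fun y => - w y) x = - zonalMean k w x := by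
    simp [zonalMean, zonal, integral_neg]
  linarith

/-- The logarithmic Sobolev inequality on the sphere. -/
lemma log_sobolev (hn : 3 ≤ n) (hw : C1 w) (hpos : ∀ x ∈ sph n, 0 < w x) :
    ∫ x, w x * Real.log (w x) ∂sphMeasure n
      - (∫ x, w x ∂sphMeasure n) * Real.log (∫ x, w x ∂sphMeasure n) ≤
      1 / (2 * (n - 1)) * ∫ x, sG w x / w x ∂sphMeasure n := by
  have : NeZero n := ⟨by omega⟩
  obtain ⟨e, he⟩ : (sph n).Nonempty :=
    ⟨EuclideanSpace.single ⟨0, by omega⟩ 1, by simp [sph]⟩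
  have hc := hw.continuousOn
  obtain ⟨x₀, hx₀, hmin⟩ := isCompact_sph.exists_isMinOn ⟨e, he⟩ hc
  obtain ⟨x₁, hx₁, hmax⟩ := isCompact_sph.exists_isMaxOn ⟨e, he⟩ hc
  set m := w x₀
  set M := w x₁
  have hm0 : 0 < m := hpos x₀ hx₀
  let p : ℕ → E n → ℝ := fun k => (zonal k (fun _ => 1) e)⁻¹ • zonal k w
  have hp : ∀ k, p k ∈ poly n k := fun k => Submodule.smul_mem _ _ (zonal_mem_poly k hc)
  have hpe : ∀ k, ∀ x ∈ sph n, p k x = zonalMean k w x := fun k x hx => by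
    simp [p, zonalMean, zonal_one_eq k he hx]
  have hps : ∀ k, Sm (p k) := fun k x _ => (contDiff_of_mem_poly (hp k)).contDiffAt
  have hlow : ∀ k, ∀ x ∈ sph n, m ≤ p k x := fun k x hx =>
    (le_zonalMean k hc (fun y hy => hmin hy) hx).trans_eq (hpe k x hx).symm
  have hup : ∀ k, ∀ x ∈ sph n, p k x ≤ M := fun k x hx =>
    (hpe k x hx).trans_le (zonalMean_le k hc (fun y hy => hmax hy) hx)
  have hpp : ∀ k, ∀ x ∈ sph n, 0 < p k x := fun k x hx => hm0.trans_le (hlow k x hx)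
  have hlim : ∀ x ∈ sph n, Tendsto (fun k => p k x) atTop (𝓝 (w x)) := fun x hx =>
    (tendsto_zonalMean hc hx).congr fun k => (hpe k x hx).symm
  have hrX : ∀ k i j, ∀ x ∈ sph n, rX i j (p k) x = zonalMean k (rX i j w) x := by
    intro k i j x hx
    have hd : DifferentiableAt ℝ (zonal k w) x :=
      (contDiff_of_mem_poly (zonal_mem_poly k hc)).contDiffAt.differentiableAt (by simp)
    have : rX i j (p k) x = (zonal k (fun _ => 1) e)⁻¹ * rX i j (zonal k w) x := by
      simp only [rX, p]
      rw [fderiv_const_smul hd]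
      rfl
    rw [this, rX_zonal k hw, zonalMean, zonal_one_eq k he hx]
  have hGlim : ∀ x ∈ sph n, Tendsto (fun k => sG (p k) x) atTop (𝓝 (sG w x)) := by
    intro x hx
    refine tendsto_finsetSum _ fun j _ => Tendsto.pow ?_ 2
    simp_rw [← sum_mul_rX hx]
    refine tendsto_finsetSum _ fun i _ => Tendsto.const_mul _ ?_
    exact (tendsto_zonalMean (hw.continuousOn_rX i j) hx).congr fun k => (hrX k i j x hx).symm
  obtain ⟨C, hC0, hC⟩ : ∃ C : ℝ, 0 ≤ C ∧ ∀ i j, ∀ x ∈ sph n, |rX i j w x| ≤ C := by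
    choose C hC using fun q : Fin n × Fin n =>
      isCompact_sph.exists_bound_of_continuousOn (hw.continuousOn_rX q.1 q.2)
    refine ⟨∑ q, |C q|, by positivity, fun i j x hx => ?_⟩
    exact ((hC (i, j) x hx).trans (le_abs_self _)).trans
      (Finset.single_le_sum (f := fun q => |C q|) (fun _ _ => abs_nonneg _) (Finset.mem_univ _))
  have hGle : ∀ k, ∀ x ∈ sph n, sG (p k) x ≤ n * (n * C) ^ 2 := by
    intro k x hx
    have h1 : ‖x‖ = 1 := by simpa [sph] using hx
    have : ∀ j ∈ Finset.univ, tD j (p k) x ^ 2 ≤ (n * C) ^ 2 := fun j _ => by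
      rw [sq_le_sq, abs_of_nonneg (by positivity : 0 ≤ n * C), ← sum_mul_rX hx]
      refine (Finset.abs_sum_le_sum_abs _ _).trans ((Finset.sum_le_card_nsmul _ _ C fun i _ => ?_).trans
        (by simp))
      rw [abs_mul, hrX k i j x hx]
      have h2 : |x i| ≤ 1 := by simpa [h1] using PiLp.norm_apply_le x i
      have h3 : |zonalMean k (rX i j w) x| ≤ C := abs_le.2
        ⟨le_zonalMean k (hw.continuousOn_rX i j) (fun y hy => (abs_le.1 (hC i j y hy)).1) hx,
          zonalMean_le k (hw.continuousOn_rX i j) (fun y hy => (abs_le.1 (hC i j y hy)).2) hx⟩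
      exact (mul_le_mul h2 h3 (abs_nonneg _) zero_le_one).trans_eq (one_mul C)
    simpa [sG] using Finset.sum_le_card_nsmul _ _ _ this
  have hG0 : ∀ v : E n → ℝ, ∀ x, 0 ≤ sG v x := fun v x => Finset.sum_nonneg fun i _ => sq_nonneg _
  have t1 : Tendsto (fun k => ∫ x, p k x ∂sphMeasure n) atTop (𝓝 (∫ x, w x ∂sphMeasure n)) :=
    tendsto_integral_of_dominated_convergence (fun _ => M)
      (fun k => (integrable_sph (hps k).continuousOn).aestronglyMeasurable) (integrable_const _)
      (fun k => ae_mem_sph.mono fun x hx => by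
        rw [Real.norm_of_nonneg (hpp k x hx).le]; exact hup k x hx)
      (ae_mem_sph.mono hlim)
  obtain ⟨B, hB⟩ := (isCompact_Icc (a := m) (b := M)).exists_bound_of_continuousOn
    (Real.continuous_mul_log.continuousOn)
  have t2 : Tendsto (fun k => ∫ x, p k x * Real.log (p k x) ∂sphMeasure n) atTop
      (𝓝 (∫ x, w x * Real.log (w x) ∂sphMeasure n)) :=
    tendsto_integral_of_dominated_convergence (fun _ => B)
      (fun k => (integrable_sph ((hps k).mul ((hps k).log (hpp k))).continuousOn).aestronglyMeasurable)
      (integrable_const _)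
      (fun k => ae_mem_sph.mono fun x hx => hB _ ⟨hlow k x hx, hup k x hx⟩)
      (ae_mem_sph.mono fun x hx => (Real.continuous_mul_log.tendsto _).comp (hlim x hx))
  have t3 : Tendsto (fun k => ∫ x, sG (p k) x / p k x ∂sphMeasure n) atTop
      (𝓝 (∫ x, sG w x / w x ∂sphMeasure n)) :=
    tendsto_integral_of_dominated_convergence (fun _ => n * (n * C) ^ 2 / m)
      (fun k => (integrable_sph ((hps k).sG.div (hps k)
        fun x hx => (hpp k x hx).ne').continuousOn).aestronglyMeasurable)
      (integrable_const _)
      (fun k => ae_mem_sph.mono fun x hx => by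
        rw [Real.norm_of_nonneg (div_nonneg (hG0 _ _) (hpp k x hx).le)]
        exact div_le_div₀ (by positivity) (hGle k x hx) hm0 (hlow k x hx))
      (ae_mem_sph.mono fun x hx => (hGlim x hx).div (hlim x hx) (hpos x hx).ne')
  have hm1 : 0 < ∫ x, w x ∂sphMeasure n := by
    have h1 := integral_mono_sph (w := fun _ => m) continuousOn_const hc fun y hy => hmin hy
    rw [integral_const, probReal_univ, one_smul] at h1
    exact hm0.trans_le h1
  exact le_of_tendsto_of_tendsto' (t2.sub (t1.mul (t1.log hm1.ne'))) (t3.const_mul _)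
    fun k => log_sobolev_poly hn (hp k) (hpp k)

end approximation

section herbst

/-- Integration of the differential inequality in Herbst's argument. -/
lemma le_deriv_zero_of_herbst {L L' : ℝ → ℝ} {c d T : ℝ} (hT : 0 < T)
    (hL : ∀ s, HasDerivAt L (L' s) s) (h0 : L 0 = 0)
    (hle : ∀ s, 0 < s → s ≤ T → s * L' s - L s ≤ c * s ^ 2 * L' s + d * s ^ 2) :
    L T * (1 / T - c) - d * T ≤ L' 0 := by
  have hd : ∀ s, 0 < s → HasDerivAt (fun s => L s * (s⁻¹ - c) - d * s)
      (L' s * (s⁻¹ - c) + L s * (-(s ^ 2)⁻¹) - d * 1) s := fun s hs =>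
    ((hL s).fun_mul ((hasDerivAt_inv hs.ne').sub_const c)).fun_sub ((hasDerivAt_id' s).const_mul d)
  have hanti : AntitoneOn (fun s => L s * (s⁻¹ - c) - d * s) (Set.Ioc 0 T) := by
    refine antitoneOn_of_deriv_nonpos (convex_Ioc 0 T)
      (fun s hs => (hd s hs.1).continuousAt.continuousWithinAt)
      (fun s hs => (hd s (interior_subset hs).1).differentiableAt.differentiableWithinAt)
      fun s hs => ?_
    have hs := interior_subset hs
    rw [(hd s hs.1).deriv]
    have e : L' s * (s⁻¹ - c) + L s * (-(s ^ 2)⁻¹) - d * 1 =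
        (s * L' s - L s - (c * s ^ 2 * L' s + d * s ^ 2)) / s ^ 2 := by
      have := hs.1.ne'
      field_simp
      ring
    rw [e]
    exact div_nonpos_of_nonpos_of_nonneg (sub_nonpos.2 (hle s hs.1 hs.2)) (sq_nonneg s)
  have hlim : Tendsto (fun s => L s * (s⁻¹ - c) - d * s) (𝓝[>] 0) (𝓝 (L' 0)) := by
    have h1 := (hL 0).tendsto_slope_zero_right
    have h2 : Tendsto (fun s => L s * c + d * s) (𝓝[>] 0) (𝓝 0) := by
      have : ContinuousAt (fun s => L s * c + d * s) 0 :=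
        ((hL 0).continuousAt.mul_const c).add (continuousAt_id.const_mul d)
      have := this.tendsto
      simp only [h0, zero_mul, mul_zero, add_zero] at this
      exact this.mono_left nhdsWithin_le_nhds
    refine (sub_zero (L' 0) ▸ h1.sub h2).congr fun s => ?_
    simp only [zero_add, h0, sub_zero, smul_eq_mul]
    ring
  rw [one_div]
  refine ge_of_tendsto hlim ?_
  filter_upwards [Ioc_mem_nhdsGT hT] with s hs
  exact hanti hs ⟨hT, le_rfl⟩ hs.2

variable {w f u : E n → ℝ}

lemma hasDerivAt_integral_exp [NeZero n] (hw : ContinuousOn w (sph n)) (s : ℝ) :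
    HasDerivAt (fun s => ∫ x, Real.exp (s * w x) ∂sphMeasure n)
      (∫ x, w x * Real.exp (s * w x) ∂sphMeasure n) s :=
  hasDerivAt_integral_sph (I := Set.univ) isOpen_univ
    (fun s _ => (hw.const_mul s).rexp)
    (fun s _ x _ => by
      simpa [mul_comm] using ((hasDerivAt_id' s).mul_const (w x)).exp)
    (by
      have h := hw.comp (f := fun q : ℝ × E n => q.2) (s := Set.univ ×ˢ sph n) continuousOn_snd
        fun q hq => hq.2
      exact h.mul ((continuousOn_fst.mul h).rexp)) (Set.mem_univ s)

lemma integral_pos_sph [NeZero n] (hw : ContinuousOn w (sph n)) (hpos : ∀ x ∈ sph n, 0 < w x) :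
    0 < ∫ x, w x ∂sphMeasure n := by
  have hne : (sph n).Nonempty := ⟨EuclideanSpace.single 0 1, by simp [sph]⟩
  obtain ⟨x₀, hx₀, hmin⟩ := isCompact_sph.exists_isMinOn hne hw
  have h1 := integral_mono_sph (w := fun _ => w x₀) continuousOn_const hw fun y hy => hmin hy
  rw [integral_const, probReal_univ, one_smul] at h1
  exact (hpos x₀ hx₀).trans_le h1

/-- The logarithmic Laplace transform of `w` under the uniform measure on the sphere. -/
def logLaplace (w : E n → ℝ) (s : ℝ) : ℝ := Real.log (∫ x, Real.exp (s * w x) ∂sphMeasure n)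

/-- The mean of `g` under the uniform measure tilted by `exp (s * w)`. -/
def tilted (w : E n → ℝ) (s : ℝ) (g : E n → ℝ) : ℝ :=
  ∫ x, g x * Real.exp (s * w x - logLaplace w s) ∂sphMeasure n

lemma continuousOn_tilt (hw : ContinuousOn w (sph n)) (s : ℝ) :
    ContinuousOn (fun x => Real.exp (s * w x - logLaplace w s)) (sph n) :=
  ((hw.const_mul s).sub continuousOn_const).rexp

lemma integral_exp_pos [NeZero n] (hw : ContinuousOn w (sph n)) (s : ℝ) :
    0 < ∫ x, Real.exp (s * w x) ∂sphMeasure n :=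
  integral_pos_sph ((hw.const_mul s).rexp) fun _ _ => Real.exp_pos _

lemma exp_logLaplace [NeZero n] (hw : ContinuousOn w (sph n)) (s : ℝ) :
    Real.exp (logLaplace w s) = ∫ x, Real.exp (s * w x) ∂sphMeasure n :=
  Real.exp_log (integral_exp_pos hw s)

lemma tilted_eq [NeZero n] (hw : ContinuousOn w (sph n)) (s : ℝ) (g : E n → ℝ) :
    tilted w s g = (∫ x, g x * Real.exp (s * w x) ∂sphMeasure n) /
      ∫ x, Real.exp (s * w x) ∂sphMeasure n := by
  rw [tilted, ← exp_logLaplace hw, ← integral_div]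
  simp_rw [Real.exp_sub, mul_div_assoc]

lemma tilted_one [NeZero n] (hw : ContinuousOn w (sph n)) (s : ℝ) : tilted w s (fun _ => 1) = 1 := by
  rw [tilted_eq hw]
  simp only [one_mul]
  exact div_self (integral_exp_pos hw s).ne'

lemma logLaplace_zero [NeZero n] (w : E n → ℝ) : logLaplace w 0 = 0 := by simp [logLaplace]

lemma tilted_zero [NeZero n] (w g : E n → ℝ) : tilted w 0 g = ∫ x, g x ∂sphMeasure n := by
  simp [tilted, logLaplace_zero]

lemma hasDerivAt_logLaplace [NeZero n] (hw : ContinuousOn w (sph n)) (s : ℝ) :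
    HasDerivAt (logLaplace w) (tilted w s w) s := by
  rw [tilted_eq hw]
  exact (hasDerivAt_integral_exp hw s).log (integral_exp_pos hw s).ne'

lemma tilted_mono [NeZero n] (hw : ContinuousOn w (sph n)) (s : ℝ) {g g' : E n → ℝ}
    (hg : ContinuousOn g (sph n)) (hg' : ContinuousOn g' (sph n)) (h : ∀ x ∈ sph n, g x ≤ g' x) :
    tilted w s g ≤ tilted w s g' :=
  integral_mono_sph (hg.mul (continuousOn_tilt hw s)) (hg'.mul (continuousOn_tilt hw s))
    fun x hx => mul_le_mul_of_nonneg_right (h x hx) (Real.exp_pos _).le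

lemma tilted_const_mul (w : E n → ℝ) (s c : ℝ) (g : E n → ℝ) :
    tilted w s (fun x => c * g x) = c * tilted w s g := by
  rw [tilted, tilted, ← integral_const_mul]
  simp_rw [mul_assoc]

/-- The logarithmic Sobolev inequality for `exp (s * w)`. -/
lemma entropy_tilted_le (hn : 3 ≤ n) (hw : C1 w) (s : ℝ) :
    s * tilted w s w - logLaplace w s ≤ s ^ 2 / (2 * (n - 1)) * tilted w s (sG w) := by
  have : NeZero n := ⟨by omega⟩
  have hc := hw.continuousOn
  have hC : C1 fun x => Real.exp (s * w x) := fun x hx => (contDiffAt_const.mul (hw x hx)).exp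
  have hZ := integral_exp_pos hc s
  have h := log_sobolev hn hC fun x _ => Real.exp_pos _
  have e1 : ∫ x, Real.exp (s * w x) * Real.log (Real.exp (s * w x)) ∂sphMeasure n =
      s * ∫ x, w x * Real.exp (s * w x) ∂sphMeasure n := by
    rw [← integral_const_mul]
    refine integral_congr_sph fun x _ => ?_
    rw [Real.log_exp]; ring
  have e2 : ∫ x, sG (fun x => Real.exp (s * w x)) x / Real.exp (s * w x) ∂sphMeasure n =
      s ^ 2 * ∫ x, sG w x * Real.exp (s * w x) ∂sphMeasure n := by
    rw [← integral_const_mul]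
    refine integral_congr_sph fun x hx => ?_
    rw [sG, sG, Finset.sum_div, Finset.sum_mul, Finset.mul_sum]
    refine Finset.sum_congr rfl fun i _ => ?_
    have hd : HasDerivAt (fun r => Real.exp (s * r)) (Real.exp (s * w x) * (s * 1)) (w x) :=
      ((hasDerivAt_id' (w x)).const_mul s).exp
    rw [tD_comp hd (hw.diff hx)]
    have := (Real.exp_pos (s * w x)).ne'
    field_simp
  rw [e1, e2] at h
  rw [tilted_eq hc, tilted_eq hc, ← sub_nonneg]
  have := div_nonneg (sub_nonneg.2 h) hZ.le
  refine this.trans_eq ?_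
  rw [logLaplace]
  field_simp

/-- The entropy of a tilted measure dominates its linear functionals. -/
lemma tilted_le_entropy_add [NeZero n] (hf : ContinuousOn f (sph n)) (hu : ContinuousOn u (sph n))
    (s t : ℝ) : s * tilted f t u ≤ t * tilted f t f - logLaplace f t + logLaplace u s := by
  have hp := continuousOn_tilt hf t
  have hq := continuousOn_tilt hu s
  have h1 : ∫ x, Real.exp (s * u x - logLaplace u s) ∂sphMeasure n = 1 := by
    simpa [tilted] using tilted_one hu s
  have h2 : ∫ x, Real.exp (t * f x - logLaplace f t) ∂sphMeasure n = 1 := by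
    simpa [tilted] using tilted_one hf t
  have i1 := (integrable_sph (hu.fun_mul hp)).const_mul s
  have i2 := (integrable_sph (hf.fun_mul hp)).const_mul t
  have i3 := (integrable_sph hp).const_mul (logLaplace f t - logLaplace u s + 1)
  have h := integral_mono_sph (n := n)
    (w := fun x => s * (u x * Real.exp (t * f x - logLaplace f t))
      - t * (f x * Real.exp (t * f x - logLaplace f t))
      + (logLaplace f t - logLaplace u s + 1) * Real.exp (t * f x - logLaplace f t))
    (w' := fun x => Real.exp (s * u x - logLaplace u s))
    (((continuousOn_const.mul (hu.mul hp)).sub (continuousOn_const.mul (hf.mul hp))).add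
      (continuousOn_const.mul hp)) hq fun x _ => by
    set X := s * u x - logLaplace u s with hX
    set Y := t * f x - logLaplace f t with hY
    have e : Real.exp X = Real.exp Y * Real.exp (X - Y) := by rw [← Real.exp_add]; ring_nf
    have := mul_le_mul_of_nonneg_left (Real.add_one_le_exp (X - Y)) (Real.exp_pos Y).le
    rw [← e] at this
    refine le_trans (le_of_eq ?_) this
    rw [hX]
    linear_combination Real.exp Y * hY
  rw [integral_add (by exact i1.sub i2) i3, integral_sub i1 i2, integral_const_mul,
    integral_const_mul, integral_const_mul, h1, h2] at h
  simp only [tilted]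
  linarith

lemma log_exp_bound_of_sG_le (hn : 3 ≤ n) (hf : C1 f) (hu : C1 u)
    (hfu : ∀ x ∈ sph n, sG f x ≤ u x) (huu : ∀ x ∈ sph n, sG u x ≤ 4 * u x)
    (hmean : ∫ x, f x ∂sphMeasure n = 0) :
    Real.log (∫ x, Real.exp (((n : ℝ) - 1) / 2 * f x) ∂sphMeasure n) ≤
      ((n : ℝ) - 1) / 2 * ∫ x, u x ∂sphMeasure n := by
  have : NeZero n := ⟨by omega⟩
  obtain ⟨K, hK⟩ : ∃ K : ℝ, K = n - 1 := ⟨_, rfl⟩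
  have hK0 : 0 < K := by
    have : (3 : ℝ) ≤ n := by exact_mod_cast hn
    linarith
  set D := ∫ x, u x ∂sphMeasure n
  have hψ : logLaplace u (K / 4) ≤ K / 2 * D := by
    have := le_deriv_zero_of_herbst (L := logLaplace u) (c := 2 / K) (d := 0) (T := K / 4)
      (by positivity) (hasDerivAt_logLaplace hu.continuousOn) (logLaplace_zero u) fun s hs _ => by
        refine (entropy_tilted_le hn hu s).trans ?_
        have h1 := tilted_mono hu.continuousOn s hu.continuousOn_sG
          (continuousOn_const.fun_mul hu.continuousOn) huu
        rw [tilted_const_mul] at h1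
        refine (mul_le_mul_of_nonneg_left h1 (by rw [← hK]; positivity)).trans_eq ?_
        rw [← hK]
        field_simp
        ring
    rw [tilted_zero] at this
    have e : (1 / (K / 4) - 2 / K) = 2 / K := by field_simp; norm_num
    rw [e, zero_mul, sub_zero, mul_div_assoc', div_le_iff₀ hK0] at this
    linarith
  have hH : ∀ t, 0 < t → t ≤ K / 2 →
      t * tilted f t f - logLaplace f t ≤ t ^ 2 / (2 * K) * tilted f t u := by
    intro t ht _
    refine (entropy_tilted_le hn hf t).trans ?_
    rw [← hK]
    exact mul_le_mul_of_nonneg_left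
      (tilted_mono hf.continuousOn t hf.continuousOn_sG hu.continuousOn hfu) (by positivity)
  have hE : ∀ t, 0 < t → t ≤ K / 2 → tilted f t u ≤ 4 * D := by
    intro t ht htK
    have h1 := tilted_le_entropy_add hf.continuousOn hu.continuousOn (K / 4) t
    have h2 := hH t ht htK
    have h0 : 0 ≤ tilted f t u := integral_nonneg_of_ae (ae_mem_sph.mono fun x hx =>
      mul_nonneg ((Finset.sum_nonneg fun i _ => sq_nonneg _).trans (hfu x hx)) (Real.exp_pos _).le)
    have h3 : t ^ 2 / (2 * K) ≤ K / 8 := by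
      rw [div_le_iff₀ (by positivity)]
      nlinarith
    have h4 := mul_le_mul_of_nonneg_right h3 h0
    have h5 : K / 8 * tilted f t u ≤ K / 8 * (4 * D) := by linarith
    exact le_of_mul_le_mul_left h5 (by positivity)
  have := le_deriv_zero_of_herbst (L := logLaplace f) (c := 0) (d := 2 * D / K) (T := K / 2)
    (by positivity) (hasDerivAt_logLaplace hf.continuousOn) (logLaplace_zero f) fun t ht htK => by
      refine (hH t ht htK).trans ((mul_le_mul_of_nonneg_left (hE t ht htK) (by positivity)).trans_eq ?_)
      field_simp
      ring
  rw [tilted_zero, hmean, sub_zero] at this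
  rw [← hK]
  have e : 2 * D / K * (K / 2) = D := by field_simp
  rw [e, sub_nonpos, mul_one_div, div_le_iff₀ (by positivity), mul_comm] at this
  exact this

end herbst

section gradient

variable {w f : E n → ℝ}

lemma fderiv_eq_inner_gradient (w : E n → ℝ) (x v : E n) : fderiv ℝ w x v = ⟪gradient w x, v⟫ := by
  simp [gradient]

lemma norm_gradient (w : E n → ℝ) (x : E n) : ‖gradient w x‖ = ‖fderiv ℝ w x‖ := by
  simp [gradient]

lemma sG_le_norm_gradient_sq {x : E n} (hx : x ∈ sph n) (w : E n → ℝ) :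
    sG w x ≤ ‖gradient w x‖ ^ 2 := by
  set g := gradient w x with hg
  have e : ∀ i, tD i w x = g i - ⟪g, x⟫ * x i := by
    intro i
    have : tvec i x = EuclideanSpace.single i 1 - x i • x := rfl
    rw [tD, fderiv_eq_inner_gradient, this, inner_sub_right, inner_smul_right,
      EuclideanSpace.inner_single_right]
    simp [hg, mul_comm]
  have h1 : ‖g‖ ^ 2 = ∑ i, g i ^ 2 := by rw [EuclideanSpace.norm_sq_eq]; simp
  have h2 : ⟪g, x⟫ = ∑ i, g i * x i := by simp [PiLp.inner_apply, mul_comm]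
  have h3 : sG w x = ∑ i, g i ^ 2 - 2 * ⟪g, x⟫ * ∑ i, g i * x i + ⟪g, x⟫ ^ 2 * ∑ i, x i ^ 2 := by
    rw [Finset.mul_sum, Finset.mul_sum, ← Finset.sum_sub_distrib, ← Finset.sum_add_distrib]
    refine Finset.sum_congr rfl fun i _ => ?_
    rw [e]; ring
  rw [h3, ← h1, ← h2, sum_sq_sph hx]
  nlinarith [sq_nonneg ⟪g, x⟫]

lemma contDiffAt_gradient {x : E n} (hf : ContDiffAt ℝ 2 f x) : ContDiffAt ℝ 1 (gradient f) x :=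
  (InnerProductSpace.toDual ℝ (E n)).symm.contDiff.contDiffAt.comp x
    (hf.fderiv_right (m := 1) (by norm_num))

lemma sG_norm_gradient_sq_le {x : E n} (hx : x ∈ sph n) (hf : ContDiffAt ℝ 2 f x)
    (hop : ‖hess f x‖ ≤ 1) :
    sG (fun y => ‖gradient f y‖ ^ 2) x ≤ 4 * ‖gradient f x‖ ^ 2 := by
  have hd : HasFDerivAt (gradient f) (hess f x) x :=
    ((contDiffAt_gradient hf).differentiableAt (by simp)).hasFDerivAt
  have h : ‖fderiv ℝ (fun y => ‖gradient f y‖ ^ 2) x‖ ≤ 2 * ‖gradient f x‖ := by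
    rw [hd.norm_sq.fderiv]
    refine ContinuousLinearMap.opNorm_le_bound _ (by positivity) fun v => ?_
    have h1 : ‖hess f x v‖ ≤ ‖v‖ :=
      ((hess f x).le_opNorm v).trans (mul_le_of_le_one_left (norm_nonneg _) hop)
    have h2 := (abs_real_inner_le_norm (gradient f x) (hess f x v)).trans
      (mul_le_mul_of_nonneg_left h1 (norm_nonneg _))
    simp only [smul_apply, ContinuousLinearMap.comp_apply, innerSL_apply_apply, nsmul_eq_mul,
      Nat.cast_ofNat, norm_mul, Real.norm_eq_abs, abs_two]
    linarith
  refine (sG_le_norm_gradient_sq hx _).trans ?_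
  rw [norm_gradient]
  nlinarith [norm_nonneg (fderiv ℝ (fun y => ‖gradient f y‖ ^ 2) x)]

end gradient

section circle

variable {w f : E 2 → ℝ} {x y : E 2}

lemma rotFun_two_apply_zero (s : ℝ) (x : E 2) :
    rotFun 0 1 s x 0 = Real.cos s * x 0 - Real.sin s * x 1 := by
  simp [rotFun_eq]; ring

lemma rotFun_two_apply_one (s : ℝ) (x : E 2) :
    rotFun 0 1 s x 1 = Real.cos s * x 1 + Real.sin s * x 0 := by
  simp [rotFun_eq]; ring

lemma rotFun_two_add (s t : ℝ) (x : E 2) :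
    rotFun 0 1 s (rotFun 0 1 t x) = rotFun 0 1 (s + t) x := by
  ext k
  fin_cases k
  · simp only [Fin.mk_zero, rotFun_two_apply_zero, rotFun_two_apply_one, Real.cos_add,
      Real.sin_add]
    ring
  · simp only [Fin.mk_one, rotFun_two_apply_zero, rotFun_two_apply_one, Real.cos_add, Real.sin_add]
    ring

lemma rotFun_add_two_pi (i j : Fin n) (s : ℝ) (x : E n) :
    rotFun i j (s + 2 * Real.pi) x = rotFun i j s x := by
  simp [rotFun]

lemma exists_cos_sin_eq {c s : ℝ} (h : c ^ 2 + s ^ 2 = 1) :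
    ∃ θ ∈ Set.Icc 0 (2 * Real.pi), Real.cos θ = c ∧ Real.sin θ = s := by
  have h1 : -1 ≤ c := by nlinarith
  have h2 : c ≤ 1 := by nlinarith
  have hcos := Real.cos_arccos h1 h2
  have hsin : Real.sin (Real.arccos c) = |s| := by
    rw [Real.sin_arccos, ← Real.sqrt_sq_eq_abs]
    congr 1; linarith
  have h3 := Real.arccos_nonneg c
  have h4 := Real.arccos_le_pi c
  rcases le_total 0 s with hs | hs
  · exact ⟨Real.arccos c, ⟨h3, by linarith⟩, hcos, by rw [hsin, abs_of_nonneg hs]⟩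
  · refine ⟨2 * Real.pi - Real.arccos c, ⟨by linarith, by linarith⟩, ?_, ?_⟩
    · rw [Real.cos_two_pi_sub, hcos]
    · rw [Real.sin_two_pi_sub, hsin, abs_of_nonpos hs, neg_neg]

lemma exists_rotFun_two_eq (hx : x ∈ sph 2) (hy : y ∈ sph 2) :
    ∃ θ ∈ Set.Icc 0 (2 * Real.pi), rotFun 0 1 θ x = y := by
  have h1 := sum_sq_sph hx
  have h2 := sum_sq_sph hy
  rw [Fin.sum_univ_two] at h1 h2
  obtain ⟨θ, hθ, hc, hs⟩ := exists_cos_sin_eq (c := x 0 * y 0 + x 1 * y 1)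
    (s := x 0 * y 1 - x 1 * y 0) (by linear_combination (y 0 ^ 2 + y 1 ^ 2) * h1 + h2)
  refine ⟨θ, hθ, ?_⟩
  ext k
  fin_cases k
  · simp only [Fin.zero_eta, rotFun_two_apply_zero, hc, hs]
    linear_combination y 0 * h1
  · simp only [Fin.mk_one, rotFun_two_apply_one, hc, hs]
    linear_combination y 1 * h1

lemma continuous_comp_rotFun (hw : ContinuousOn w (sph 2)) (hx : x ∈ sph 2) :
    Continuous fun s => w (rotFun 0 1 s x) :=
  hw.comp_continuous (continuous_iff_continuousAt.2
    fun s => (hasDerivAt_rotFun (by decide) s x).continuousAt) fun s => rotFun_mem (by decide) s hx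

/-- The uniform measure on the circle is arc length. -/
lemma intervalIntegral_rotFun (hw : ContinuousOn w (sph 2)) (hx : x ∈ sph 2) :
    ∫ s in (0)..(2 * Real.pi), w (rotFun 0 1 s x) = 2 * Real.pi * ∫ y, w y ∂sphMeasure 2 := by
  have hpi := Real.two_pi_pos
  have hconst : ∀ y ∈ sph 2, ∫ s in (0)..(2 * Real.pi), w (rotFun 0 1 s y) =
      ∫ s in (0)..(2 * Real.pi), w (rotFun 0 1 s x) := by
    intro y hy
    obtain ⟨θ, -, rfl⟩ := exists_rotFun_two_eq hx hy
    simp_rw [rotFun_two_add]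
    rw [intervalIntegral.integral_comp_add_right fun s => w (rotFun 0 1 s x), zero_add, add_comm _ θ]
    have hper : Function.Periodic (fun s => w (rotFun 0 1 s x)) (2 * Real.pi) := fun s => by
      simp only [rotFun_add_two_pi]
    simpa using hper.intervalIntegral_add_eq θ 0
  have hI : Integrable (Function.uncurry fun (y : E 2) s => w (rotFun 0 1 s y))
      ((sphMeasure 2).prod (volume.restrict (Set.Ioc 0 (2 * Real.pi)))) := by
    have hc : ContinuousOn (Function.uncurry fun (y : E 2) s => w (rotFun 0 1 s y))
        (sph 2 ×ˢ Set.Icc 0 (2 * Real.pi)) :=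
      hw.comp (f := fun q : E 2 × ℝ => rotFun 0 1 q.2 q.1) (by unfold rotFun rvec; fun_prop)
        fun q hq => rotFun_mem (by decide) q.2 hq.1
    have := (hc.integrableOn_compact (μ := (sphMeasure 2).prod volume)
      (isCompact_sph.prod isCompact_Icc)).mono_set (Set.prod_mono le_rfl Set.Ioc_subset_Icc_self)
    rwa [IntegrableOn, ← Measure.prod_restrict, restrict_sph] at this
  have hswap := integral_integral_swap hI
  simp_rw [← intervalIntegral.integral_of_le hpi.le] at hswap
  rw [integral_congr_sph hconst, integral_const, probReal_univ, one_smul] at hswap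
  rw [hswap]
  have : ∀ s, ∫ y, w (rotFun 0 1 s y) ∂sphMeasure 2 = ∫ y, w y ∂sphMeasure 2 := fun s =>
    integral_comp_isometry (rot (by decide) s) w
  simp [this]

lemma sub_le_integral_norm_gradient (hf : C1 f) (hx : x ∈ sph 2) (hy : y ∈ sph 2) :
    f y - f x ≤ Real.pi * ∫ z, ‖gradient f z‖ ∂sphMeasure 2 := by
  obtain ⟨θ, hθ, rfl⟩ := exists_rotFun_two_eq hx hy
  have hg : ContinuousOn (fun z => ‖gradient f z‖) (sph 2) := by
    simp_rw [norm_gradient]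
    exact hf.continuousOn_fderiv.norm
  have hgc := continuous_comp_rotFun hg hx
  have hX := continuous_comp_rotFun (hf.continuousOn_rX 0 1) hx
  have hle : ∀ s, ‖rX 0 1 f (rotFun 0 1 s x)‖ ≤ ‖gradient f (rotFun 0 1 s x)‖ := by
    intro s
    have h1 := sum_sq_sph (rotFun_mem (n := 2) (i := 0) (j := 1) (by decide) s hx)
    have h2 : ‖rvec 0 1 (rotFun 0 1 s x)‖ = 1 := by
      rw [EuclideanSpace.norm_eq, Real.sqrt_eq_one, ← h1, Fin.sum_univ_two, Fin.sum_univ_two]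
      simp [rvec_apply, add_comm]
    rw [norm_gradient]
    exact (ContinuousLinearMap.le_opNorm _ _).trans_eq (by rw [h2, mul_one])
  have hFTC : ∀ a b, a ≤ b → |f (rotFun 0 1 b x) - f (rotFun 0 1 a x)| ≤
      ∫ s in a..b, ‖gradient f (rotFun 0 1 s x)‖ := by
    intro a b hab
    rw [← intervalIntegral.integral_eq_sub_of_hasDerivAt (fun s _ =>
      hasDerivAt_comp_rotFun (by decide) (hf.diff (rotFun_mem (by decide) s hx)))
      (hX.intervalIntegrable a b)]
    exact intervalIntegral.norm_integral_le_of_norm_le hab (ae_of_all _ fun s _ => hle s)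
      (hgc.intervalIntegrable a b)
  have h1 := hFTC 0 θ hθ.1
  have h2 := hFTC θ (2 * Real.pi) hθ.2
  have h3 := intervalIntegral.integral_add_adjacent_intervals (μ := volume)
    (hgc.intervalIntegrable 0 θ) (hgc.intervalIntegrable θ (2 * Real.pi))
  rw [intervalIntegral_rotFun hg hx] at h3
  have e : rotFun 0 1 (2 * Real.pi) x = x := by
    have := rotFun_add_two_pi 0 1 0 x
    rwa [zero_add, rotFun_zero] at this
  rw [e] at h2
  rw [rotFun_zero] at h1
  have h4 := (abs_le.1 h1).2
  have h5 := (abs_le.1 h2).1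
  linarith

lemma log_exp_bound_circle (hf : C1 f) (hmean : ∫ x, f x ∂sphMeasure 2 = 0) :
    Real.log (∫ x, Real.exp (1 / 2 * f x) ∂sphMeasure 2) ≤
      1 / 2 * ∫ x, ‖gradient f x‖ ^ 2 ∂sphMeasure 2 := by
  have hne : (sph 2).Nonempty := ⟨EuclideanSpace.single 0 1, by simp [sph]⟩
  obtain ⟨a, ha, hmin⟩ := isCompact_sph.exists_isMinOn hne hf.continuousOn
  obtain ⟨b, hb, hmax⟩ := isCompact_sph.exists_isMaxOn hne hf.continuousOn
  have hosc := sub_le_integral_norm_gradient hf ha hb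
  have hg : ContinuousOn (fun z => ‖gradient f z‖) (sph 2) := by
    simp_rw [norm_gradient]
    exact hf.continuousOn_fderiv.norm
  set m := ∫ z, ‖gradient f z‖ ∂sphMeasure 2 with hm
  set D := ∫ z, ‖gradient f z‖ ^ 2 ∂sphMeasure 2 with hD
  have hmD : m ^ 2 ≤ D := by
    have h := integral_mono_sph (n := 2) (w := fun z => 2 * m * ‖gradient f z‖ - m ^ 2)
      (w' := fun z => ‖gradient f z‖ ^ 2) ((continuousOn_const.mul hg).sub continuousOn_const)
      (hg.pow 2) fun z _ => by nlinarith [sq_nonneg (‖gradient f z‖ - m)]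
    rw [integral_sub ((integrable_sph hg).const_mul _) (integrable_const _), integral_const_mul,
      integral_const, probReal_univ, one_smul, ← hm, ← hD] at h
    linarith
  have hsub := ProbabilityTheory.hasSubgaussianMGF_of_mem_Icc_of_integral_eq_zero
    (integrable_sph hf.continuousOn).aemeasurable
    (ae_mem_sph.mono fun x hx => Set.mem_Icc.2 ⟨hmin hx, hmax hx⟩) hmean
  have h1 := hsub.cgf_le (1 / 2)
  rw [ProbabilityTheory.cgf, ProbabilityTheory.mgf] at h1
  refine h1.trans ?_
  have h0 : 0 ≤ f b - f a := sub_nonneg.2 (hmax ha)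
  have e : (((‖f b - f a‖₊ / 2) ^ 2 : ℝ≥0) : ℝ) = (f b - f a) ^ 2 / 4 := by
    push_cast
    rw [Real.norm_of_nonneg h0]; ring
  rw [e]
  have h2 : (f b - f a) ^ 2 ≤ Real.pi ^ 2 * m ^ 2 := by
    rw [← mul_pow]
    exact pow_le_pow_left₀ h0 hosc 2
  have h3 : Real.pi ^ 2 ≤ 16 := by nlinarith [Real.pi_le_four, Real.pi_pos]
  nlinarith [mul_le_mul_of_nonneg_right h3 (sq_nonneg m)]

end circle

end Helpers

/-- **Corollary 3.2, (3.3) (Statement 7).** Sharpened exponential bound on the sphere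
via the Euclidean Hessian and gradient. -/
theorem log_exp_bound_euclidean_hessian
    {n : ℕ} (hn : 2 ≤ n) (f : E n → ℝ) (U : Set (E n)) (hU : IsOpen U)
    (hUS : Metric.sphere (0 : E n) 1 ⊆ U) (hf : ContDiffOn ℝ 2 f U)
    (hmean : ∫ θ, f θ ∂sphMeasure n = 0)
    (hop : ∀ θ ∈ Metric.sphere (0 : E n) 1, ‖hess f θ‖ ≤ 1) :
    Real.log (∫ θ, Real.exp (((n : ℝ) - 1) / 2 * f θ) ∂sphMeasure n) ≤
      ((n : ℝ) - 1) / 2 * ∫ θ, ‖gradient f θ‖ ^ 2 ∂sphMeasure n := by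
  have hfx : ∀ x ∈ sph n, ContDiffAt ℝ 2 f x := fun x hx =>
    hf.contDiffAt (hU.mem_nhds (hUS hx))
  have hC1 : C1 f := fun x hx => (hfx x hx).of_le (by norm_num)
  rcases hn.eq_or_lt with rfl | hn3
  · have h2 : ((2 : ℕ) : ℝ) - 1 = 1 := by norm_num
    rw [h2]
    exact log_exp_bound_circle hC1 hmean
  · exact log_exp_bound_of_sG_le hn3 hC1 (u := fun x => ‖gradient f x‖ ^ 2)
      (fun x hx => (contDiffAt_gradient (hfx x hx)).norm_sq ℝ)
      (fun x hx => sG_le_norm_gradient_sq hx f)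
      (fun x hx => sG_norm_gradient_sq_le hx (hfx x hx) (hop x hx)) hmean

end SecondOrderConc
end
end

section
/- Let f be C³-smooth on an open neighbourhood of S^{n-1}. Then for every θ ∈ S^{n-1} and every v ∈ ℝ^n, Δ_S φ_v(θ) − ⟨∇_S (Δ_S f)(θ), v⟩ = (n−3) ⟨∇_S f(θ), v⟩ − 2 ⟨v,θ⟩ Δ_S f(θ), where φ_v is the function θ ↦ ⟨∇_S f(θ), v⟩ on S^{n-1}. -/
open MeasureTheory Metric Filter
open scoped RealInnerProductSpace ENNReal NNReal

noncomputable section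

namespace SecondOrderConc

variable {n : ℕ}

/-- The gradient of a `C²` function is differentiable and its derivative represents the second
Fréchet derivative. -/
theorem inner_hess_apply {G : E n → ℝ} {x : E n} (hG : ContDiffAt ℝ 2 G x) (w u : E n) :
    ⟪hess G x w, u⟫ = fderiv ℝ (fderiv ℝ G) x w u := by
  have hD : DifferentiableAt ℝ (fderiv ℝ G) x :=
    (hG.fderiv_right (m := 1) (by norm_num)).differentiableAt (by norm_num)
  have hrepr : gradient G = fun y => ∑ i, fderiv ℝ G y (EuclideanSpace.basisFun (Fin n) ℝ i) •
      EuclideanSpace.basisFun (Fin n) ℝ i := by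
    funext y
    rw [← (EuclideanSpace.basisFun (Fin n) ℝ).sum_repr' (gradient G y)]
    refine Finset.sum_congr rfl fun i _ => ?_
    rw [real_inner_comm, inner_gradient_left]
  have hg : DifferentiableAt ℝ (gradient G) x := by
    rw [hrepr]
    fun_prop
  have h1 := (hg.hasFDerivAt.inner ℝ (hasFDerivAt_const u x)).fderiv
  have h2 := (hD.hasFDerivAt.clm_apply (hasFDerivAt_const u x)).fderiv
  have h3 : (fun y => ⟪gradient G y, u⟫) = fun y => fderiv ℝ G y u :=
    funext fun y => inner_gradient_left
  rw [h3, h2] at h1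
  have h4 := congrArg (fun T : E n →L[ℝ] ℝ => T w) h1
  simpa [hess, fderivInnerCLM_apply] using h4.symm

theorem projPerp_apply (θ x : E n) : projPerp θ x = x - ⟪θ, x⟫ • θ := rfl

theorem inner_projPerp_left (θ x y : E n) : ⟪projPerp θ x, y⟫ = ⟪x, projPerp θ y⟫ := by
  simp only [projPerp_apply, inner_sub_left, inner_sub_right, inner_smul_left, inner_smul_right,
    real_inner_comm, conj_trivial]
  rw [real_inner_comm x θ]
  ring

theorem inner_projPerp_self {θ : E n} (hθ : ⟪θ, θ⟫ = 1) (x : E n) : ⟪projPerp θ x, θ⟫ = 0 := by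
  rw [projPerp_apply, inner_sub_left, inner_smul_left, hθ, real_inner_comm]
  simp

theorem inner_sgrad {G : E n → ℝ} {θ : E n} (v : E n) :
    ⟪sgrad G θ, v⟫ = fderiv ℝ G θ v - fderiv ℝ G θ θ * ⟪θ, v⟫ := by
  rw [sgrad, inner_sub_left, inner_smul_left, inner_gradient_left, inner_gradient_left]
  simp

theorem inner_sgrad_eq_fderiv_projPerp {G : E n → ℝ} {θ : E n} (v : E n) :
    ⟪sgrad G θ, v⟫ = fderiv ℝ G θ (projPerp θ v) := by
  rw [inner_sgrad, projPerp_apply, map_sub, map_smul, smul_eq_mul, mul_comm]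

/-- The spherical Laplacian as the sum of the spherical second derivatives along the projections of
the standard basis vectors. -/
theorem sLap_eq_sum_projPerp {G : E n → ℝ} {θ : E n} (hG : ContDiffAt ℝ 2 G θ) :
    sLap G θ = ∑ i, (fderiv ℝ (fderiv ℝ G) θ
        (projPerp θ (EuclideanSpace.basisFun (Fin n) ℝ i))
        (projPerp θ (EuclideanSpace.basisFun (Fin n) ℝ i)) -
      fderiv ℝ G θ θ * ⟪projPerp θ (EuclideanSpace.basisFun (Fin n) ℝ i),
        projPerp θ (EuclideanSpace.basisFun (Fin n) ℝ i)⟫) := by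
  rw [sLap, LinearMap.trace_eq_sum_inner _ (EuclideanSpace.basisFun (Fin n) ℝ)]
  refine Finset.sum_congr rfl fun i _ => ?_
  set e := EuclideanSpace.basisFun (Fin n) ℝ i
  change ⟪e, projPerp θ (hess G θ (projPerp θ e) - ⟪gradient G θ, θ⟫ • projPerp θ e)⟫ = _
  rw [← inner_projPerp_left, inner_sub_right, inner_smul_right, real_inner_comm,
    inner_hess_apply hG, inner_gradient_left]

/-- The spherical Laplacian in terms of Euclidean derivatives. -/
theorem sLap_eq {G : E n → ℝ} {θ : E n} (hθ : ⟪θ, θ⟫ = 1) (hG : ContDiffAt ℝ 2 G θ) :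
    sLap G θ = ∑ i, fderiv ℝ (fderiv ℝ G) θ (EuclideanSpace.basisFun (Fin n) ℝ i)
        (EuclideanSpace.basisFun (Fin n) ℝ i) -
      fderiv ℝ (fderiv ℝ G) θ θ θ - ((n : ℝ) - 1) * fderiv ℝ G θ θ := by
  rw [sLap_eq_sum_projPerp hG]
  set B := fderiv ℝ (fderiv ℝ G) θ
  set b := EuclideanSpace.basisFun (Fin n) ℝ
  have hθb : ∑ i, ⟪θ, b i⟫ • b i = θ := by
    simpa only [real_inner_comm] using b.sum_repr' θ
  have h1 : ∑ i, ⟪θ, b i⟫ * B θ (b i) = B θ θ := by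
    conv_rhs => arg 2; rw [← hθb]
    simp only [map_sum, map_smul, smul_eq_mul]
  have h2 : ∑ i, ⟪θ, b i⟫ * B (b i) θ = B θ θ := by
    conv_rhs => arg 1; arg 2; rw [← hθb]
    simp only [map_sum, map_smul, sum_apply, smul_apply, smul_eq_mul]
  have h3 : ∑ i, ⟪θ, b i⟫ * ⟪θ, b i⟫ = 1 := by
    rw [← hθ, ← b.sum_inner_mul_inner θ θ]
    simp only [real_inner_comm]
  have key : ∀ i, B (projPerp θ (b i)) (projPerp θ (b i)) -
      fderiv ℝ G θ θ * ⟪projPerp θ (b i), projPerp θ (b i)⟫ =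
      B (b i) (b i) - ⟪θ, b i⟫ * B θ (b i) - ⟪θ, b i⟫ * B (b i) θ +
        (⟪θ, b i⟫ * ⟪θ, b i⟫) * (B θ θ + fderiv ℝ G θ θ) - fderiv ℝ G θ θ := by
    intro i
    have hb : ⟪b i, b i⟫ = 1 := by simp
    simp only [projPerp_apply, inner_sub_left, inner_sub_right, inner_smul_left, inner_smul_right,
      conj_trivial, map_sub, map_smul, sub_apply, smul_apply, smul_eq_mul, hθ, hb,
      real_inner_comm θ (b i)]
    ring
  rw [Finset.sum_congr rfl fun i _ => key i]
  simp only [Finset.sum_sub_distrib, Finset.sum_add_distrib, ← Finset.sum_mul, h1, h2, h3]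
  simp
  ring

/-- The great circle through `θ` with initial velocity `w`. -/
def greatCircle (θ w : E n) (t : ℝ) : E n := Real.cos t • θ + Real.sin t • w

theorem norm_greatCircle {θ w : E n} (hθ : ⟪θ, θ⟫ = 1) (hw : ⟪w, w⟫ = 1) (h : ⟪w, θ⟫ = 0)
    (t : ℝ) : ‖greatCircle θ w t‖ = 1 := by
  have h' : ⟪θ, w⟫ = 0 := by rw [real_inner_comm, h]
  have : ‖greatCircle θ w t‖ ^ 2 = 1 := by
    rw [← real_inner_self_eq_norm_sq, greatCircle]
    simp only [inner_add_left, inner_add_right, inner_smul_left, inner_smul_right, hθ, hw, h, h',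
      conj_trivial]
    nlinarith [Real.sin_sq_add_cos_sq t]
  nlinarith [norm_nonneg (greatCircle θ w t)]

theorem hasDerivAt_greatCircle (θ w : E n) (t : ℝ) :
    HasDerivAt (greatCircle θ w) (greatCircle w (-θ) t) t := by
  have := ((Real.hasDerivAt_cos t).smul_const θ).add ((Real.hasDerivAt_sin t).smul_const w)
  refine this.congr_deriv ?_
  simp only [greatCircle, smul_neg, neg_smul]
  abel

@[simp]
theorem greatCircle_zero (θ w : E n) : greatCircle θ w 0 = θ := by simp [greatCircle]

theorem deriv_comp_greatCircle {G : E n → ℝ} {θ w : E n} {t : ℝ}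
    (hG : DifferentiableAt ℝ G (greatCircle θ w t)) :
    deriv (fun s => G (greatCircle θ w s)) t =
      fderiv ℝ G (greatCircle θ w t) (greatCircle w (-θ) t) :=
  (hG.hasFDerivAt.comp_hasDerivAt t (hasDerivAt_greatCircle θ w t)).deriv

open Topology in
theorem deriv_deriv_comp_greatCircle {G : E n → ℝ} {θ w : E n} (hG : ContDiffAt ℝ 2 G θ) :
    deriv (deriv fun s => G (greatCircle θ w s)) 0 =
      fderiv ℝ (fderiv ℝ G) θ w w - fderiv ℝ G θ θ := by
  have hD : DifferentiableAt ℝ (fderiv ℝ G) (greatCircle θ w 0) := by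
    rw [greatCircle_zero]
    exact (hG.fderiv_right (m := 1) (by norm_num)).differentiableAt (by norm_num)
  have hc : Tendsto (greatCircle θ w) (𝓝 0) (𝓝 θ) := by
    simpa using (hasDerivAt_greatCircle θ w 0).continuousAt.tendsto
  have hev : (deriv fun s => G (greatCircle θ w s)) =ᶠ[𝓝 0]
      fun t => fderiv ℝ G (greatCircle θ w t) (greatCircle w (-θ) t) := by
    filter_upwards [hc.eventually (hG.eventually (by simp))] with t ht
    exact deriv_comp_greatCircle (ht.differentiableAt (by norm_num))
  rw [hev.deriv_eq]
  have := ((hD.hasFDerivAt.comp_hasDerivAt 0 (hasDerivAt_greatCircle θ w 0)).clm_apply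
    (hasDerivAt_greatCircle w (-θ) 0)).deriv
  simpa [sub_eq_add_neg] using this

theorem fderiv_eq_of_eqOn_sphere {G H : E n → ℝ} {θ w : E n} (hθ : ⟪θ, θ⟫ = 1)
    (hw : ⟪w, θ⟫ = 0) (hG : DifferentiableAt ℝ G θ) (hH : DifferentiableAt ℝ H θ)
    (h : ∀ x : E n, ‖x‖ = 1 → G x = H x) : fderiv ℝ G θ w = fderiv ℝ H θ w := by
  obtain rfl | hw0 := eq_or_ne w 0
  · simp
  have hn : ‖w‖ ≠ 0 := norm_ne_zero_iff.2 hw0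
  set u := ‖w‖⁻¹ • w
  have hwu : w = ‖w‖ • u := by simp [u, smul_smul, hn]
  have hu : ⟪u, u⟫ = 1 := by
    simp [u, norm_smul, hn]
  have huθ : ⟪u, θ⟫ = 0 := by simp [u, inner_smul_left, hw]
  have h1 := deriv_comp_greatCircle (G := G) (θ := θ) (w := u) (t := 0) (by simpa using hG)
  have h2 := deriv_comp_greatCircle (G := H) (θ := θ) (w := u) (t := 0) (by simpa using hH)
  rw [funext fun s => h _ (norm_greatCircle hθ hu huθ s), h2] at h1
  rw [hwu]
  simp only [greatCircle_zero] at h1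
  simp [h1]

theorem fderiv_fderiv_sub_eq_of_eqOn_sphere {G H : E n → ℝ} {θ w : E n} (hθ : ⟪θ, θ⟫ = 1)
    (hw : ⟪w, θ⟫ = 0) (hG : ContDiffAt ℝ 2 G θ) (hH : ContDiffAt ℝ 2 H θ)
    (h : ∀ x : E n, ‖x‖ = 1 → G x = H x) :
    fderiv ℝ (fderiv ℝ G) θ w w - fderiv ℝ G θ θ * ⟪w, w⟫ =
      fderiv ℝ (fderiv ℝ H) θ w w - fderiv ℝ H θ θ * ⟪w, w⟫ := by
  obtain rfl | hw0 := eq_or_ne w 0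
  · simp
  have hn : ‖w‖ ≠ 0 := norm_ne_zero_iff.2 hw0
  set u := ‖w‖⁻¹ • w
  have hwu : w = ‖w‖ • u := by simp [u, smul_smul, hn]
  have hu : ⟪u, u⟫ = 1 := by
    simp [u, norm_smul, hn]
  have huθ : ⟪u, θ⟫ = 0 := by simp [u, inner_smul_left, hw]
  have h1 := deriv_deriv_comp_greatCircle (w := u) hG
  rw [funext fun s => h _ (norm_greatCircle hθ hu huθ s), deriv_deriv_comp_greatCircle hH] at h1
  rw [hwu]
  simp only [map_smul, smul_apply, smul_eq_mul, inner_smul_left, inner_smul_right, hu, conj_trivial]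
  linear_combination (-‖w‖ * ‖w‖) * h1

/-- The spherical gradient depends only on the restriction to the sphere. -/
theorem inner_sgrad_eq_of_eqOn_sphere {G H : E n → ℝ} {θ : E n} (hθ : ⟪θ, θ⟫ = 1)
    (hG : DifferentiableAt ℝ G θ) (hH : DifferentiableAt ℝ H θ)
    (h : ∀ x : E n, ‖x‖ = 1 → G x = H x) (v : E n) : ⟪sgrad G θ, v⟫ = ⟪sgrad H θ, v⟫ := by
  rw [inner_sgrad_eq_fderiv_projPerp, inner_sgrad_eq_fderiv_projPerp]
  exact fderiv_eq_of_eqOn_sphere hθ (inner_projPerp_self hθ v) hG hH h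

/-- The spherical Laplacian depends only on the restriction to the sphere. -/
theorem sLap_eq_of_eqOn_sphere {G H : E n → ℝ} {θ : E n} (hθ : ⟪θ, θ⟫ = 1)
    (hG : ContDiffAt ℝ 2 G θ) (hH : ContDiffAt ℝ 2 H θ)
    (h : ∀ x : E n, ‖x‖ = 1 → G x = H x) : sLap G θ = sLap H θ := by
  rw [sLap_eq_sum_projPerp hG, sLap_eq_sum_projPerp hH]
  exact Finset.sum_congr rfl fun i _ =>
    fderiv_fderiv_sub_eq_of_eqOn_sphere hθ (inner_projPerp_self hθ _) hG hH h

theorem ext0_apply_of_norm_eq_one (g : E n → ℝ) {x : E n} (hx : ‖x‖ = 1) : ext0 g x = g x := by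
  simp [ext0, hx]

theorem contDiffAt_ext0 {k : WithTop ℕ∞} {g : E n → ℝ} {θ : E n} (hθ : ‖θ‖ = 1)
    (hg : ContDiffAt ℝ k g θ) : ContDiffAt ℝ k (ext0 g) θ := by
  have h0 : θ ≠ 0 := by
    rintro rfl
    simp at hθ
  have hN : ContDiffAt ℝ k (fun x : E n => ‖x‖⁻¹ • x) θ :=
    ((contDiffAt_norm ℝ h0).inv (norm_ne_zero_iff.2 h0)).smul contDiffAt_id
  refine ContDiffAt.comp θ ?_ hN
  simpa [hθ] using hg

theorem differentiableAt_ext0 {g : E n → ℝ} {θ : E n} (hθ : ‖θ‖ = 1)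
    (hg : DifferentiableAt ℝ g θ) : DifferentiableAt ℝ (ext0 g) θ := by
  have h0 : θ ≠ 0 := by
    rintro rfl
    simp at hθ
  have hN : DifferentiableAt ℝ (fun x : E n => ‖x‖⁻¹ • x) θ :=
    ((differentiableAt_id.norm ℝ h0).inv (norm_ne_zero_iff.2 h0)).smul differentiableAt_id
  refine DifferentiableAt.comp θ ?_ hN
  simpa [hθ] using hg

/-- The spherical Laplacian of `f` extended off the sphere by the formula of `sLap_eq`. -/
def sLapExt (f : E n → ℝ) (x : E n) : ℝ :=
  ∑ i, fderiv ℝ (fderiv ℝ f) x (EuclideanSpace.basisFun (Fin n) ℝ i)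
      (EuclideanSpace.basisFun (Fin n) ℝ i) -
    fderiv ℝ (fderiv ℝ f) x x x - ((n : ℝ) - 1) * fderiv ℝ f x x

theorem differentiableAt_sLapExt_and_fderiv {f : E n → ℝ} {x : E n} (hf : ContDiffAt ℝ 3 f x) :
    DifferentiableAt ℝ (sLapExt f) x ∧ ∀ w, fderiv ℝ (sLapExt f) x w =
      ∑ i, fderiv ℝ (fderiv ℝ (fderiv ℝ f)) x w (EuclideanSpace.basisFun (Fin n) ℝ i)
        (EuclideanSpace.basisFun (Fin n) ℝ i) -
      (fderiv ℝ (fderiv ℝ (fderiv ℝ f)) x w x x + fderiv ℝ (fderiv ℝ f) x w x +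
        fderiv ℝ (fderiv ℝ f) x x w) -
      ((n : ℝ) - 1) * (fderiv ℝ (fderiv ℝ f) x w x + fderiv ℝ f x w) := by
  have hf1 : ContDiffAt ℝ 2 (fderiv ℝ f) x := hf.fderiv_right (by norm_num)
  have hf2 : ContDiffAt ℝ 1 (fderiv ℝ (fderiv ℝ f)) x := hf1.fderiv_right (by norm_num)
  have h1 := (hf1.differentiableAt (by norm_num)).hasFDerivAt
  have h2 := (hf2.differentiableAt (by norm_num)).hasFDerivAt
  have hid := hasFDerivAt_id (𝕜 := ℝ) x
  have hsum := HasFDerivAt.fun_sum (u := Finset.univ) fun i _ =>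
    (h2.clm_apply (hasFDerivAt_const (EuclideanSpace.basisFun (Fin n) ℝ i) x)).clm_apply
      (hasFDerivAt_const (EuclideanSpace.basisFun (Fin n) ℝ i) x)
  have h : HasFDerivAt (sLapExt f) _ x := (hsum.sub ((h2.clm_apply hid).clm_apply hid)).sub
    ((h1.clm_apply hid).const_mul ((n : ℝ) - 1))
  refine ⟨h.differentiableAt, fun w => ?_⟩
  rw [h.fderiv]
  simp
  ring

theorem contDiffAt_inner_sgrad {f : E n → ℝ} {x : E n} (hf : ContDiffAt ℝ 3 f x) (v : E n) :
    ContDiffAt ℝ 2 (fun x => ⟪sgrad f x, v⟫) x := by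
  have hf1 : ContDiffAt ℝ 2 (fderiv ℝ f) x := hf.fderiv_right (by norm_num)
  simp only [inner_sgrad]
  exact (hf1.clm_apply contDiffAt_const).sub ((hf1.clm_apply contDiffAt_id).mul
    (contDiffAt_id.inner ℝ contDiffAt_const))

theorem fderiv_inner_sgrad {f : E n → ℝ} {x : E n} (hf : ContDiffAt ℝ 2 f x) (v w : E n) :
    fderiv ℝ (fun x => ⟪sgrad f x, v⟫) x w = fderiv ℝ (fderiv ℝ f) x w v -
      ((fderiv ℝ (fderiv ℝ f) x w x + fderiv ℝ f x w) * ⟪x, v⟫ + fderiv ℝ f x x * ⟪w, v⟫) := by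
  have hf1 : ContDiffAt ℝ 1 (fderiv ℝ f) x := hf.fderiv_right (by norm_num)
  have h1 := (hf1.differentiableAt (by norm_num)).hasFDerivAt
  have hid := hasFDerivAt_id (𝕜 := ℝ) x
  simp only [inner_sgrad]
  have h : HasFDerivAt (fun x => fderiv ℝ f x v - fderiv ℝ f x x * ⟪x, v⟫) _ x :=
    (h1.clm_apply (hasFDerivAt_const v x)).sub
    ((h1.clm_apply hid).mul (hid.inner ℝ (hasFDerivAt_const v x)))
  rw [h.fderiv]
  simp [fderivInnerCLM_apply]
  ring

open Topology in
theorem fderiv_fderiv_inner_sgrad {f : E n → ℝ} {x : E n} (hf : ContDiffAt ℝ 3 f x) (v w : E n) :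
    fderiv ℝ (fderiv ℝ fun x => ⟪sgrad f x, v⟫) x w w =
      fderiv ℝ (fderiv ℝ (fderiv ℝ f)) x w w v -
      ((fderiv ℝ (fderiv ℝ (fderiv ℝ f)) x w w x + 2 * fderiv ℝ (fderiv ℝ f) x w w) * ⟪x, v⟫ +
        2 * (fderiv ℝ (fderiv ℝ f) x w x + fderiv ℝ f x w) * ⟪w, v⟫) := by
  have hf1 : ContDiffAt ℝ 2 (fderiv ℝ f) x := hf.fderiv_right (by norm_num)
  have hf2 : ContDiffAt ℝ 1 (fderiv ℝ (fderiv ℝ f)) x := hf1.fderiv_right (by norm_num)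
  have h1 := (hf1.differentiableAt (by norm_num)).hasFDerivAt
  have h2 := (hf2.differentiableAt (by norm_num)).hasFDerivAt
  have hid := hasFDerivAt_id (𝕜 := ℝ) x
  have hw := hasFDerivAt_const (𝕜 := ℝ) w x
  have hv := hasFDerivAt_const (𝕜 := ℝ) v x
  have hφ : DifferentiableAt ℝ (fderiv ℝ fun x => ⟪sgrad f x, v⟫) x :=
    ((contDiffAt_inner_sgrad hf v).fderiv_right (m := 1) (by norm_num)).differentiableAt
      (by norm_num)
  have hev : (fun y => fderiv ℝ (fun x => ⟪sgrad f x, v⟫) y w) =ᶠ[𝓝 x] fun y =>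
      fderiv ℝ (fderiv ℝ f) y w v -
      ((fderiv ℝ (fderiv ℝ f) y w y + fderiv ℝ f y w) * ⟪y, v⟫ + fderiv ℝ f y y * ⟪w, v⟫) := by
    filter_upwards [hf.eventually (by simp)] with y hy
    exact fderiv_inner_sgrad (hy.of_le (by norm_num)) v w
  have h3 := (hφ.hasFDerivAt.clm_apply hw).fderiv
  have h : HasFDerivAt (fun y => fderiv ℝ (fderiv ℝ f) y w v -
      ((fderiv ℝ (fderiv ℝ f) y w y + fderiv ℝ f y w) * ⟪y, v⟫ + fderiv ℝ f y y * ⟪w, v⟫)) _ x :=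
    ((h2.clm_apply hw).clm_apply hv).sub
      (((((h2.clm_apply hw).clm_apply hid).add (h1.clm_apply hw)).mul (hid.inner ℝ hv)).add
        ((h1.clm_apply hid).mul_const ⟪w, v⟫))
  rw [hev.fderiv_eq, h.fderiv] at h3
  have h4 := congrArg (fun T : E n →L[ℝ] ℝ => T w) h3
  simp [fderivInnerCLM_apply] at h4
  rw [← h4]
  ring

/-- Moving the contracted pair of indices of a third derivative. -/
theorem fderiv_fderiv_fderiv_rotate {f : E n → ℝ} {x : E n} (hf : ContDiffAt ℝ 3 f x)
    (w v : E n) : fderiv ℝ (fderiv ℝ (fderiv ℝ f)) x w w v =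
      fderiv ℝ (fderiv ℝ (fderiv ℝ f)) x v w w := by
  have hf1 : ContDiffAt ℝ 2 (fderiv ℝ f) x := hf.fderiv_right (by norm_num)
  have hf2 : ContDiffAt ℝ 1 (fderiv ℝ (fderiv ℝ f)) x := hf1.fderiv_right (by norm_num)
  have h2 := (hf2.differentiableAt (by norm_num)).hasFDerivAt
  have hw := hasFDerivAt_const (𝕜 := ℝ) w x
  have hv := hasFDerivAt_const (𝕜 := ℝ) v x
  have hev : (fun y => fderiv ℝ (fderiv ℝ f) y w v) =ᶠ[nhds x]
      fun y => fderiv ℝ (fderiv ℝ f) y v w := by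
    filter_upwards [hf.eventually (by simp)] with y hy
    exact ((hy.of_le (by norm_num : (2 : WithTop ℕ∞) ≤ 3)).isSymmSndFDerivAt (by simp)).eq w v
  have h := hev.fderiv_eq (𝕜 := ℝ)
  have hl : HasFDerivAt (fun y => fderiv ℝ (fderiv ℝ f) y w v) _ x :=
    (h2.clm_apply hw).clm_apply hv
  have hr : HasFDerivAt (fun y => fderiv ℝ (fderiv ℝ f) y v w) _ x :=
    (h2.clm_apply hv).clm_apply hw
  rw [hl.fderiv, hr.fderiv] at h
  have h4 := congrArg (fun T : E n →L[ℝ] ℝ => T w) h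
  simp at h4
  rw [h4, (hf1.isSymmSndFDerivAt (by simp)).eq w v]

theorem sLap_inner_sgrad {f : E n → ℝ} {θ : E n} (hθ : ⟪θ, θ⟫ = 1) (hf : ContDiffAt ℝ 3 f θ)
    (v : E n) : sLap (fun x => ⟪sgrad f x, v⟫) θ - ⟪sgrad (sLapExt f) θ, v⟫ =
      ((n : ℝ) - 3) * ⟪sgrad f θ, v⟫ - 2 * ⟪θ, v⟫ * sLapExt f θ := by
  rw [sLap_eq hθ (contDiffAt_inner_sgrad hf v), inner_sgrad, inner_sgrad,
    (differentiableAt_sLapExt_and_fderiv hf).2, (differentiableAt_sLapExt_and_fderiv hf).2,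
    fderiv_inner_sgrad (hf.of_le (by norm_num)), sLapExt]
  simp only [fderiv_fderiv_inner_sgrad hf,
    fun i => fderiv_fderiv_fderiv_rotate hf (EuclideanSpace.basisFun (Fin n) ℝ i),
    Finset.sum_sub_distrib, Finset.sum_add_distrib, ← Finset.sum_mul]
  set b := EuclideanSpace.basisFun (Fin n) ℝ
  have hvb : ∑ i, ⟪b i, v⟫ • b i = v := b.sum_repr' v
  have h1 : ∑ i, 2 * (fderiv ℝ (fderiv ℝ f) θ (b i) θ + fderiv ℝ f θ (b i)) * ⟪b i, v⟫ =
      2 * (fderiv ℝ (fderiv ℝ f) θ v θ + fderiv ℝ f θ v) := by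
    conv_rhs => rw [← hvb, map_sum, map_sum]
    rw [sum_apply, ← Finset.sum_add_distrib, Finset.mul_sum]
    refine Finset.sum_congr rfl fun i _ => ?_
    simp only [map_smul, smul_apply, smul_eq_mul]
    ring
  rw [h1, ← Finset.mul_sum, fderiv_fderiv_fderiv_rotate hf θ v,
    ((hf.of_le (by norm_num : (2 : WithTop ℕ∞) ≤ 3)).isSymmSndFDerivAt (by simp)).eq θ v]
  ring

/-- **Lemma 4.3 (Statement 10).** Commutator of the spherical Laplacian and gradient. -/
theorem sLap_sgrad_commutator
    {n : ℕ} (hn : 2 ≤ n) (f : E n → ℝ) (U : Set (E n)) (hU : IsOpen U)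
    (hUS : Metric.sphere (0 : E n) 1 ⊆ U) (hf : ContDiffOn ℝ 3 f U) :
    ∀ θ ∈ Metric.sphere (0 : E n) 1, ∀ v : E n,
      sLap (ext0 (fun x => ⟪sgrad f x, v⟫)) θ - ⟪sgrad (ext0 (sLap f)) θ, v⟫ =
        ((n : ℝ) - 3) * ⟪sgrad f θ, v⟫ - 2 * ⟪v, θ⟫ * sLap f θ := by
  intro θ hθS v
  have hθn : ‖θ‖ = 1 := by simpa using hθS
  have hθ : ⟪θ, θ⟫ = 1 := by rw [real_inner_self_eq_norm_sq, hθn, one_pow]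
  have hfS : ∀ x : E n, ‖x‖ = 1 → ContDiffAt ℝ 3 f x := fun x hx =>
    hf.contDiffAt (hU.mem_nhds (hUS (by simpa using hx)))
  have hfθ := hfS θ hθn
  have hL : ∀ x : E n, ‖x‖ = 1 → sLap f x = sLapExt f x := fun x hx =>
    sLap_eq (by rw [real_inner_self_eq_norm_sq, hx, one_pow]) ((hfS x hx).of_le (by norm_num))
  have hφ := contDiffAt_inner_sgrad hfθ v
  have hev : ext0 (sLap f) =ᶠ[nhds θ] ext0 (sLapExt f) := by
    have h0 : θ ≠ 0 := by
      rintro rfl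
      simp at hθn
    filter_upwards [isOpen_ne.mem_nhds h0] with x hx
    exact hL _ (by
      rw [norm_smul, norm_inv, norm_norm, inv_mul_cancel₀ (norm_ne_zero_iff.2 hx)])
  have hgrad : sgrad (ext0 (sLap f)) θ = sgrad (ext0 (sLapExt f)) θ := by
    rw [sgrad, sgrad, hev.gradient_eq]
  rw [sLap_eq_of_eqOn_sphere hθ (contDiffAt_ext0 hθn hφ) hφ
      fun x hx => ext0_apply_of_norm_eq_one _ hx,
    hgrad, inner_sgrad_eq_of_eqOn_sphere hθ
      (differentiableAt_ext0 hθn (differentiableAt_sLapExt_and_fderiv hfθ).1)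
      (differentiableAt_sLapExt_and_fderiv hfθ).1
      fun x hx => ext0_apply_of_norm_eq_one _ hx,
    hL θ hθn, real_inner_comm θ v]
  exact sLap_inner_sgrad hθ hfθ v

end SecondOrderConc
end
end
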